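/- arXiv:math/0508172 — 3 statements merged into one kernel-verified Lean document; each statement's English description precedes it below -/
import Mathlib

section
/- Let (G, 𝓐) be a local convergence pairing on a Peano continuum X without cut points, and suppose B, A_1, …, A_m ∈ 𝓐 is a crossing sequence. Let (f_i) ⊆ G with f_i(B) = B for all i act as a convergence sequence on B with attractor p and repeller n. If for all 1 ≤ j ≤ m we have n ∉ A_j and f_i^{-1}(p) ∉ A_j for all i, then f_i(A_j) → p for all 1 ≤ j ≤ m, meaning: for every open neighborhood U of p, f_i(A_j) ⊆ U for all sufficiently large i. -/
/-!
Members of a null family of closed sets that come arbitrarily close to a point `p` without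
containing it must shrink to `p`: those of large diameter are finitely many, hence bounded away
from `p`. Let `f_i` move every point of a set `C` to `p`. If `A` meets `C`, then `f_i(A)` contains
points close to `p`; if `A` separates two points of `C`, then `f_i(A)` separates two points close
to `p`, so it meets every small connected neighborhood of `p`. In both cases `f_i(A) → p`.

This applies to `A = A_{j+1}` and `C = A_j` once `f_i(A_j) → p`, and for `A = A_1` to
`C = B \ {n}`. When `A_1` separates `B`, it also separates `B \ {n}`, because `n` is an
accumulation point of `B`: a point of `B` close to `n` can replace `n`.
-/

open Set Filter Topology Pointwise

/-- The set `E` separates the points `x` and `y`: both lie outside `E` and in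
different connected components of the complement of `E`. -/
def SepPts {X : Type*} [TopologicalSpace X] (E : Set X) (x y : X) : Prop :=
  x ∉ E ∧ y ∉ E ∧ connectedComponentIn Eᶜ x ≠ connectedComponentIn Eᶜ y

/-- The set `E` separates the set `Y ⊆ X \ E`: two points of `Y` lie in different
connected components of the complement of `E`. -/
def SepSet {X : Type*} [TopologicalSpace X] (E Y : Set X) : Prop :=
  Y ⊆ Eᶜ ∧ ∃ x ∈ Y, ∃ y ∈ Y, connectedComponentIn Eᶜ x ≠ connectedComponentIn Eᶜ y

/-- Two (closed) sets `A` and `B` cross: they intersect, or each separates the other. -/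
def Crosses {X : Type*} [TopologicalSpace X] (A B : Set X) : Prop :=
  (A ∩ B).Nonempty ∨ (SepSet A B ∧ SepSet B A)

/-- There is a (finite) crossing sequence in `𝓐` from `A` to `B`. -/
def CrossSeqFromTo {X : Type*} [TopologicalSpace X] (𝓐 : Set (Set X)) (A B : Set X) : Prop :=
  ∃ (n : ℕ) (c : ℕ → Set X), c 0 = A ∧ c n = B ∧ (∀ i ≤ n, c i ∈ 𝓐) ∧
    ∀ i < n, Crosses (c i) (c (i + 1))

/-- A collection `𝓐` is cross-connected: any two of its elements are joined by a
crossing sequence in `𝓐`. -/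
def CrossConnected {X : Type*} [TopologicalSpace X] (𝓐 : Set (Set X)) : Prop :=
  ∀ A ∈ 𝓐, ∀ B ∈ 𝓐, CrossSeqFromTo 𝓐 A B

/-- There is a crossing sequence `A, A_1, …, A_n, B` in `𝓐` (with `n ≥ 1`) whose
intermediate terms `A_1, …, A_n` are disjoint from `D`. -/
def CrossSeqAvoiding {X : Type*} [TopologicalSpace X] (𝓐 : Set (Set X)) (A B D : Set X) :
    Prop :=
  ∃ n : ℕ, 1 ≤ n ∧ ∃ c : ℕ → Set X, c 0 = A ∧ c (n + 1) = B ∧ (∀ i ≤ n + 1, c i ∈ 𝓐) ∧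
    (∀ i ≤ n, Crosses (c i) (c (i + 1))) ∧ ∀ i, 1 ≤ i → i ≤ n → c i ∩ D = ∅

/-- A collection of subsets of a metric space is null if for every `ε > 0` only finitely
many of its members have diameter greater than `ε`. -/
def NullFam {X : Type*} [PseudoMetricSpace X] (𝓐 : Set (Set X)) : Prop :=
  ∀ ε : ℝ, 0 < ε → {A ∈ 𝓐 | ε < Metric.diam A}.Finite

/-- A collection `𝓐` is fine if any two distinct points are separated by the union of
some finite subcollection of `𝓐`. -/
def FineFam {X : Type*} [PseudoMetricSpace X] (𝓐 : Set (Set X)) : Prop :=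
  ∀ x y : X, x ≠ y → ∃ 𝓑 ⊆ 𝓐, 𝓑.Finite ∧ SepPts (⋃₀ 𝓑) x y

/-- A sequence of maps `T i : X → X` acts as a convergence sequence on the subset `A`,
with repeller `n ∈ A` and attractor `p ∈ A`: for every compact `C ⊆ A \ {n}` and every
open neighborhood `U` of `p`, eventually `T i '' C ⊆ U`. -/
def ConvSeqOn {X : Type*} [TopologicalSpace X] (A : Set X) (T : ℕ → X → X) (n p : X) :
    Prop :=
  n ∈ A ∧ p ∈ A ∧ ∀ C : Set X, C ⊆ A → IsCompact C → n ∉ C →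
    ∀ U : Set X, IsOpen U → p ∈ U → ∀ᶠ i in atTop, T i '' C ⊆ U

/-- The stabilizer of a subset `A ⊆ X` in `G`. -/
def stab (G : Type*) {X : Type*} [Group G] [MulAction G X] (A : Set X) : Set G :=
  {g : G | g • A = A}

/-- The subset `S` of the group `G` acts as a convergence group on `A ⊆ X`: every
sequence of distinct elements of `S` has a subsequence acting as a convergence
sequence on `A`. -/
def ConvGroupOn {G X : Type*} [Group G] [MulAction G X] [TopologicalSpace X]
    (S : Set G) (A : Set X) : Prop :=
  ∀ g : ℕ → G, (∀ i, g i ∈ S) → Function.Injective g →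
    ∃ k : ℕ → ℕ, StrictMono k ∧ ∃ n p : X,
      ConvSeqOn A (fun i => (g (k i) • · : X → X)) n p

/-- `(G, 𝓐)` is a local convergence pairing on `X`. -/
structure IsLocalConvPairing (G : Type*) {X : Type*} [Group G] [MulAction G X]
    [MetricSpace X] (𝓐 : Set (Set X)) : Prop where
  closed : ∀ A ∈ 𝓐, IsClosed A
  invariant : ∀ g : G, ∀ A ∈ 𝓐, g • A ∈ 𝓐
  big : ∀ A ∈ 𝓐, 2 < A.encard
  null : NullFam 𝓐
  fine : FineFam 𝓐
  stabConv : ∀ A ∈ 𝓐, ConvGroupOn (stab G A) A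
  connect : ∀ A ∈ 𝓐, ∀ B ∈ 𝓐, (A ∩ B).encard ≤ 2 →
    (∀ c : X, A ∩ B = {c} → ∀ b ∈ B, b ≠ c → CrossSeqAvoiding 𝓐 A B {b, c}) ∧
    ((¬ ∃ c : X, A ∩ B = {c}) → CrossSeqAvoiding 𝓐 A B (A ∩ B))

section Separation

variable {X : Type*} [TopologicalSpace X]

lemma SepPts.inter_nonempty {S W : Set X} {x y : X} (h : SepPts S x y) (hW : IsPreconnected W)
    (hx : x ∈ W) (hy : y ∈ W) : (S ∩ W).Nonempty := by
  by_contra hdisj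
  have hWS : W ⊆ Sᶜ :=
    (disjoint_iff_inter_eq_empty.2 (not_nonempty_iff_eq_empty.1 hdisj)).subset_compl_left
  exact h.2.2 (connectedComponentIn_eq (hW.subset_connectedComponentIn hx hWS hy))

lemma SepPts.smul {G : Type*} [Group G] [MulAction G X] [ContinuousConstSMul G X] {S : Set X}
    {x y : X} (h : SepPts S x y) (g : G) : SepPts (g • S) (g • x) (g • y) := by
  have hcomp {z : X} (hz : z ∉ S) :
      g • connectedComponentIn Sᶜ z = connectedComponentIn (g • S)ᶜ (g • z) := by
    rw [← smul_set_compl]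
    exact (Homeomorph.smul g).image_connectedComponentIn hz
  refine ⟨fun hx => h.1 (smul_mem_smul_set_iff.1 hx), fun hy => h.2.1 (smul_mem_smul_set_iff.1 hy),
    fun heq => h.2.2 ?_⟩
  rwa [← hcomp h.1, ← hcomp h.2.1, smul_left_cancel_iff] at heq

lemma SepSet.exists_sepPts {S Y : Set X} (h : SepSet S Y) :
    ∃ x ∈ Y, ∃ y ∈ Y, SepPts S x y := by
  obtain ⟨hYS, x, hx, y, hy, hxy⟩ := h
  exact ⟨x, hx, y, hy, hYS hx, hYS hy, hxy⟩

lemma SepSet.sdiff_singleton [LocallyConnectedSpace X] {S Y : Set X} {n : X} (h : SepSet S Y)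
    (hS : IsClosed S) (hn : AccPt n (𝓟 Y)) : SepSet S (Y \ {n}) := by
  obtain ⟨hYS, x, hx, y, hy, hxy⟩ := h
  have replace_point : ∀ z ∈ Y, ∃ z' ∈ Y \ {n},
      connectedComponentIn Sᶜ z = connectedComponentIn Sᶜ z' := by
    intro z hz
    obtain rfl | hzn := eq_or_ne z n
    · have hnhds : connectedComponentIn Sᶜ z ∈ 𝓝 z :=
        connectedComponentIn_mem_nhds (hS.isOpen_compl.mem_nhds (hYS hz))
      obtain ⟨z', ⟨hz'C, hz'Y⟩, hz'⟩ := accPt_iff_nhds.1 hn _ hnhds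
      exact ⟨z', ⟨hz'Y, hz'⟩, connectedComponentIn_eq hz'C⟩
    · exact ⟨z, ⟨hz, hzn⟩, rfl⟩
  obtain ⟨x', hx', hxx'⟩ := replace_point x hx
  obtain ⟨y', hy', hyy'⟩ := replace_point y hy
  exact ⟨sdiff_subset.trans hYS, x', hx', y', hy', hxx' ▸ hyy' ▸ hxy⟩

lemma eventually_inter_nonempty_of_sepPts [LocallyConnectedSpace X] {ι : Type*} {l : Filter ι}
    {S : ι → Set X} {x y : ι → X} {p : X} (hS : ∀ᶠ i in l, SepPts (S i) (x i) (y i))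
    (hx : Tendsto x l (𝓝 p)) (hy : Tendsto y l (𝓝 p)) {W : Set X} (hW : W ∈ 𝓝 p) :
    ∀ᶠ i in l, (S i ∩ W).Nonempty := by
  obtain ⟨V, ⟨hVo, hpV, hVc⟩, hVW⟩ :=
    (LocallyConnectedSpace.open_connected_basis p).mem_iff.1 hW
  have hV : V ∈ 𝓝 p := hVo.mem_nhds hpV
  filter_upwards [hS, hx hV, hy hV] with i hi hxi hyi
  exact (hi.inter_nonempty hVc.isPreconnected hxi hyi).mono (inter_subset_inter_right _ hVW)

end Separation

section ConvergenceSequence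

variable {X : Type*} [TopologicalSpace X] {B : Set X} {T : ℕ → X → X} {n p : X}

lemma ConvSeqOn.tendsto (h : ConvSeqOn B T n p) {x : X} (hx : x ∈ B) (hxn : x ≠ n) :
    Tendsto (fun i => T i x) atTop (𝓝 p) := by
  refine tendsto_nhds.2 fun U hU hpU => ?_
  filter_upwards [h.2.2 {x} (singleton_subset_iff.2 hx) isCompact_singleton hxn.symm U hU hpU]
    with i hi
  exact hi (mem_image_of_mem _ rfl)

/-- Otherwise `B \ {n}` is compact, so some `T i` maps it away from two given points of `B \ {p}`,
which leaves `n` as the only preimage of both. -/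
lemma ConvSeqOn.accPt_repeller [T1Space X] (h : ConvSeqOn B T n p) (hB : IsCompact B)
    (hcard : 2 < B.encard) (hT : ∀ i, SurjOn (T i) B B) : AccPt n (𝓟 B) := by
  refine accPt_iff_nhds.2 fun V hV => ?_
  by_contra! hisolated
  obtain ⟨-, hpB, hattr⟩ := h
  have hBp : (B \ {p}).Nontrivial := by
    rw [← encard_sdiff_singleton_add_one hpB, ← one_add_one_eq_two] at hcard
    exact one_lt_encard_iff_nontrivial.1 (lt_of_add_lt_add_right hcard)
  obtain ⟨a, ⟨haB, hap⟩, b, ⟨hbB, hbp⟩, hab⟩ := hBp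
  have hcompact : IsCompact (B \ interior V) := hB.diff isOpen_interior
  have hpab : p ∈ ({a, b} : Set X)ᶜ := by
    rintro (rfl | rfl)
    exacts [hap rfl, hbp rfl]
  obtain ⟨i, hi⟩ := (hattr (B \ interior V) sdiff_subset hcompact
    (fun hn => hn.2 (mem_interior_iff_mem_nhds.2 hV)) {a, b}ᶜ
    (toFinite {a, b}).isClosed.isOpen_compl hpab).exists
  have preimage_eq : ∀ x ∈ B, T i x ∈ ({a, b} : Set X) → x = n := by
    intro x hxB hxab
    by_contra hxn
    have hxV : x ∉ interior V := fun hxV => hxn (hisolated x ⟨interior_subset hxV, hxB⟩)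
    exact hi (mem_image_of_mem _ ⟨hxB, hxV⟩) hxab
  obtain ⟨x, hxB, rfl⟩ := hT i haB
  obtain ⟨y, hyB, rfl⟩ := hT i hbB
  exact hab (by rw [preimage_eq x hxB (.inl rfl), preimage_eq y hyB (.inr rfl)])

end ConvergenceSequence

section NullFamily

variable {X : Type*} [PseudoMetricSpace X] {𝓐 : Set (Set X)} {p : X}

lemma NullFam.eventually_diam_le (hnull : NullFam 𝓐) (hclosed : ∀ S ∈ 𝓐, IsClosed S) {ε : ℝ}
    (hε : 0 < ε) : ∀ᶠ x in 𝓝 p, ∀ S ∈ 𝓐, p ∉ S → x ∈ S → Metric.diam S ≤ ε := by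
  have avoid_large : ∀ᶠ x in 𝓝 p, ∀ S ∈ {S ∈ 𝓐 | ε < Metric.diam S}, p ∉ S → x ∉ S := by
    refine (eventually_all_finite (hnull ε hε)).2 fun S hS => ?_
    by_cases hpS : p ∈ S
    · exact .of_forall fun _ h => absurd hpS h
    · filter_upwards [(hclosed S hS.1).isOpen_compl.mem_nhds hpS] with x hx _ using hx
  filter_upwards [avoid_large] with x hx S hS hpS hxS
  exact not_lt.1 fun hlt => hx S ⟨hS, hlt⟩ hpS hxS

lemma NullFam.tendsto_smallSets (hnull : NullFam 𝓐) (hclosed : ∀ S ∈ 𝓐, IsClosed S)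
    (hbdd : ∀ S ∈ 𝓐, Bornology.IsBounded S) {ι : Type*} {l : Filter ι} {S : ι → Set X}
    (hS : ∀ᶠ i in l, S i ∈ 𝓐) (hp : ∀ᶠ i in l, p ∉ S i)
    (hmeet : ∀ W ∈ 𝓝 p, ∀ᶠ i in l, (S i ∩ W).Nonempty) :
    Tendsto S l (𝓝 p).smallSets := by
  refine tendsto_smallSets_iff.2 fun U hU => ?_
  obtain ⟨r, hr, hrU⟩ := Metric.mem_nhds_iff.1 hU
  have hW := inter_mem (Metric.ball_mem_nhds p (half_pos hr))
    (hnull.eventually_diam_le hclosed (half_pos hr))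
  filter_upwards [hS, hp, hmeet _ hW] with i hi hpi ⟨x, hxS, hxp, hdiam⟩
  intro y hy
  refine hrU (Metric.mem_ball.2 ?_)
  calc dist y p ≤ dist y x + dist x p := dist_triangle y x p
    _ < r / 2 + r / 2 := add_lt_add_of_le_of_lt
        ((Metric.dist_le_diam_of_mem (hbdd _ hi) hy hxS).trans (hdiam _ hi hpi hxS)) hxp
    _ = r := add_halves r

lemma NullFam.tendsto_smul_smallSets [LocallyConnectedSpace X] {G : Type*} [Group G]
    [MulAction G X] [ContinuousConstSMul G X] (hnull : NullFam 𝓐)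
    (hclosed : ∀ S ∈ 𝓐, IsClosed S) (hbdd : ∀ S ∈ 𝓐, Bornology.IsBounded S) {ι : Type*}
    {l : Filter ι} {f : ι → G} {A C : Set X} (hA : ∀ᶠ i in l, f i • A ∈ 𝓐)
    (hp : ∀ᶠ i in l, (f i)⁻¹ • p ∉ A) (hC : ∀ x ∈ C, Tendsto (fun i => f i • x) l (𝓝 p))
    (hAC : (C ∩ A).Nonempty ∨ SepSet A C) : Tendsto (fun i => f i • A) l (𝓝 p).smallSets := by
  refine hnull.tendsto_smallSets hclosed hbdd hA
    (hp.mono fun i hi => mem_smul_set_iff_inv_smul_mem.not.2 hi) fun W hW => ?_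
  rcases hAC with ⟨x, hxC, hxA⟩ | hsep
  · filter_upwards [hC x hxC hW] with i hi
    exact ⟨f i • x, smul_mem_smul_set hxA, hi⟩
  · obtain ⟨x, hx, y, hy, hxy⟩ := hsep.exists_sepPts
    exact eventually_inter_nonempty_of_sepPts (.of_forall fun i => hxy.smul (f i))
      (hC x hx) (hC y hy) hW

end NullFamily

theorem crossing_sequence_attracted_general {G X : Type*} [Group G] [MulAction G X]
    [MetricSpace X] [LocallyConnectedSpace X] [ContinuousConstSMul G X] {𝓐 : Set (Set X)}
    (hclosed : ∀ S ∈ 𝓐, IsClosed S) (hbdd : ∀ S ∈ 𝓐, Bornology.IsBounded S)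
    (hinv : ∀ g : G, ∀ S ∈ 𝓐, g • S ∈ 𝓐) (hnull : NullFam 𝓐)
    {B : Set X} (hB : IsCompact B) (hBcard : 2 < B.encard) {m : ℕ} {A : ℕ → Set X}
    (hA : ∀ j, 1 ≤ j → j ≤ m → A j ∈ 𝓐) (hBA1 : Crosses B (A 1))
    (hchain : ∀ j, 1 ≤ j → j < m → Crosses (A j) (A (j + 1)))
    {f : ℕ → G} (hfB : ∀ i, f i • B = B) {n p : X}
    (hconv : ConvSeqOn B (fun i (x : X) => f i • x) n p) (hn : n ∉ A 1)
    (hp : ∀ j, 1 ≤ j → j ≤ m → ∀ᶠ i in atTop, (f i)⁻¹ • p ∉ A j) :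
    ∀ j, 1 ≤ j → j ≤ m → Tendsto (fun i => f i • A j) atTop (𝓝 p).smallSets := by
  intro j hj
  induction j, hj using Nat.le_induction with
  | base =>
    intro hm
    have hacc : AccPt n (𝓟 B) := hconv.accPt_repeller hB hBcard fun i => (hfB i).ge
    refine hnull.tendsto_smul_smallSets hclosed hbdd (C := B \ {n})
      (.of_forall fun i => hinv _ _ (hA 1 le_rfl hm)) (hp 1 le_rfl hm)
      (fun x hx => hconv.tendsto hx.1 hx.2) ?_
    exact hBA1.imp (fun ⟨x, hxB, hxA⟩ => ⟨x, ⟨hxB, ne_of_mem_of_not_mem hxA hn⟩, hxA⟩)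
      fun h => h.2.sdiff_singleton (hclosed _ (hA 1 le_rfl hm)) hacc
  | succ j hj ih =>
    intro hjm
    refine hnull.tendsto_smul_smallSets hclosed hbdd (C := A j)
      (.of_forall fun i => hinv _ _ (hA _ (by lia) hjm)) (hp _ (by lia) hjm) (fun x hx => ?_)
      ((hchain j hj hjm).imp_right And.right)
    exact (ih (by lia)).of_smallSets (.of_forall fun i => smul_mem_smul_set hx)

/-- Lemma: if `B, A_1, …, A_m` is a crossing sequence, `(f_i)` stabilizes `B` and acts
as a convergence sequence on `B` with attractor `p` and repeller `n`, and each `A_j`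
avoids `n` and all `f_i⁻¹(p)`, then `f_i(A_j) → p` for all `j`. -/
theorem crossing_sequence_attracted {G X : Type*} [Group G] [MulAction G X]
    [MetricSpace X] [CompactSpace X] [ConnectedSpace X] [LocallyConnectedSpace X]
    [ContinuousConstSMul G X]
    (hcut : ∀ x : X, IsPreconnected ({x}ᶜ : Set X))
    (𝓐 : Set (Set X)) (h : IsLocalConvPairing G 𝓐)
    (B : Set X) (hB : B ∈ 𝓐) (m : ℕ) (hm : 1 ≤ m) (A : ℕ → Set X)
    (hA : ∀ j, 1 ≤ j → j ≤ m → A j ∈ 𝓐)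
    (hBA1 : Crosses B (A 1))
    (hchain : ∀ j, 1 ≤ j → j < m → Crosses (A j) (A (j + 1)))
    (f : ℕ → G) (hfB : ∀ i, f i • B = B) (n p : X)
    (hconv : ConvSeqOn B (fun i (x : X) => f i • x) n p)
    (hn : ∀ j, 1 ≤ j → j ≤ m → n ∉ A j)
    (hp : ∀ j, 1 ≤ j → j ≤ m → ∀ i, (f i)⁻¹ • p ∉ A j) :
    ∀ j, 1 ≤ j → j ≤ m → ∀ U : Set X, IsOpen U → p ∈ U →
      ∀ᶠ i in atTop, f i • A j ⊆ U := by
  intro j hj hjm U hU hpU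
  exact tendsto_smallSets_iff.1
    (crossing_sequence_attracted_general h.closed (fun S hS => (h.closed S hS).isCompact.isBounded)
      h.invariant h.null (h.closed B hB).isCompact (h.big B hB) hA hBA1 hchain hfB hconv
      (hn 1 le_rfl hm) (fun j hj hjm => .of_forall (hp j hj hjm)) j hj hjm) U (hU.mem_nhds hpU)
end

section
/- Let (G, 𝓐) be a local convergence pairing on a Peano continuum X without cut points, and let A, B ∈ 𝓐. If (f_i) ⊆ st(A) ∩ st(B) acts as a convergence sequence on both A and B, and p is the attractor of (f_i) in its action on A and also the attractor of (f_i) in its action on B, then the repeller n of (f_i) in its action on A is also the repeller of (f_i) in its action on B. -/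
/-! Suppose the repellers `n` and `n'` differ. The inverses `(f i)⁻¹` attract `A \ {p}` to `n` and
`B \ {p}` to `n'`, so `A ∩ B = {p}`. By symmetry let `n' ≠ p`, and pass to a subsequence along
which `f i • n'` converges to some `q ∈ B`. Take a crossing sequence `A, A₁, …, Aₘ, B` whose
intermediate terms avoid `p` and `q`, and put `g i = (f i)⁻¹`.

The translates `g i • Aₘ` come arbitrarily close to `n'`, because `Aₘ` crosses `B` and avoids the
repeller `p` of `g` on `B`. As `Aⱼ` is closed and avoids `q`, the point `n'` eventually lies outside
`g i • Aⱼ`. Hence, once the sets `g i • Aⱼ` come close to `n'`, no set occurs among them infinitely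
often, and by nullity they shrink to `n'`; by local connectedness the translates of `Aⱼ₋₁`, which
crosses `Aⱼ`, then come close to `n'` too. Going down the crossing sequence, `A = g i • A` comes
arbitrarily close to `n'`, whence `n' ∈ A ∩ B = {p}`. -/

open Set Filter Topology Pointwise

/-- The lower Kuratowski limit of the sets `E i` along the filter `l`: the points to which the sets
`E i` eventually come arbitrarily close. -/
def kuratowskiLiminf {ι X : Type*} [TopologicalSpace X] (l : Filter ι) (E : ι → Set X) : Set X :=
  {x | ∀ V ∈ 𝓝 x, ∀ᶠ i in l, (E i ∩ V).Nonempty}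

lemma kuratowskiLiminf_const {ι X : Type*} [TopologicalSpace X] (l : Filter ι) [l.NeBot]
    (A : Set X) : kuratowskiLiminf l (fun _ => A) = closure A := by
  ext x
  simp only [kuratowskiLiminf, eventually_const, mem_ofPred_eq, mem_closure_iff_nhds,
    inter_comm A]

lemma mem_kuratowskiLiminf_iff_isPreconnected {ι X : Type*} [TopologicalSpace X]
    [LocallyConnectedSpace X] {l : Filter ι} {E : ι → Set X} {x : X} :
    x ∈ kuratowskiLiminf l E ↔
      ∀ W, IsOpen W → x ∈ W → IsPreconnected W → ∀ᶠ i in l, (E i ∩ W).Nonempty := by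
  refine ⟨fun h W hWo hxW _ => h W (hWo.mem_nhds hxW), fun h V hV => ?_⟩
  obtain ⟨W, hWV, hWo, hxW, hWc⟩ :=
    locallyConnectedSpace_iff_subsets_isOpen_isConnected.1 inferInstance x V hV
  exact (h W hWo hxW hWc.isPreconnected).mono fun i hi =>
    hi.mono (inter_subset_inter_right _ hWV)

section NullFam

variable {ι X : Type*} [PseudoMetricSpace X] {l : Filter ι} {E : ι → Set X} {x : X}

lemma tendsto_smallSets_of_tendsto_diam (hE : ∀ i, Bornology.IsBounded (E i))
    (hdiam : Tendsto (fun i => Metric.diam (E i)) l (𝓝 0)) (hx : x ∈ kuratowskiLiminf l E) :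
    Tendsto E l (𝓝 x).smallSets := by
  refine tendsto_smallSets_iff.2 fun V hV => ?_
  obtain ⟨ε, hε, hball⟩ := Metric.mem_nhds_iff.1 hV
  filter_upwards [hdiam.eventually_lt_const (half_pos hε),
    hx _ (Metric.ball_mem_nhds x (half_pos hε))] with i hi ⟨y, hy, hyx⟩ z hz
  refine hball (Metric.mem_ball.2 ?_)
  calc dist z x ≤ dist z y + dist y x := dist_triangle z y x
    _ < ε / 2 + ε / 2 :=
      add_lt_add ((Metric.dist_le_diam_of_mem (hE i) hz hy).trans_lt hi) hyx
    _ = ε := add_halves ε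

variable {𝓐 : Set (Set X)}

lemma NullFam.tendsto_diam (hnull : NullFam 𝓐) (hclosed : ∀ C ∈ 𝓐, IsClosed C)
    (hE : ∀ i, E i ∈ 𝓐) (hxE : ∀ᶠ i in l, x ∉ E i) (hx : x ∈ kuratowskiLiminf l E) :
    Tendsto (fun i => Metric.diam (E i)) l (𝓝 0) := by
  have eventually_ne : ∀ C ∈ 𝓐, ∀ᶠ i in l, E i ≠ C := by
    intro C hC
    by_cases hxC : x ∈ C
    · filter_upwards [hxE] with i hi h
      exact hi (h ▸ hxC)
    · filter_upwards [hx Cᶜ ((hclosed C hC).isOpen_compl.mem_nhds hxC)] with i ⟨y, hy, hyC⟩ h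
      exact hyC (h ▸ hy)
  refine Metric.nhds_basis_closedBall.tendsto_right_iff.2 fun ε hε => ?_
  filter_upwards [(eventually_all_finite (hnull ε hε)).2 fun C hC => eventually_ne C hC.1] with i hi
  rw [mem_closedBall_zero_iff, Real.norm_of_nonneg Metric.diam_nonneg]
  by_contra! hlt
  exact hi (E i) ⟨hE i, hlt⟩ rfl

end NullFam

section Crosses

lemma inter_nonempty_of_connectedComponentIn_ne {X : Type*} [TopologicalSpace X] {C W : Set X}
    {y z : X} (hW : IsPreconnected W) (hy : y ∈ W) (hz : z ∈ W)
    (hyz : connectedComponentIn Cᶜ y ≠ connectedComponentIn Cᶜ z) : (C ∩ W).Nonempty := by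
  by_contra hempty
  have hWC : W ⊆ Cᶜ := fun w hw hwC => hempty ⟨w, hwC, hw⟩
  exact hyz (connectedComponentIn_eq (hW.subset_connectedComponentIn hy hWC hz))

lemma Crosses.inter_nonempty_of_subset {X : Type*} [TopologicalSpace X] {C F W : Set X}
    (hCF : Crosses C F) (hW : IsPreconnected W) (hFW : F ⊆ W) : (C ∩ W).Nonempty := by
  rcases hCF with hmeet | ⟨⟨-, y, hy, z, hz, hyz⟩, -⟩
  · exact hmeet.mono (inter_subset_inter_right C hFW)
  · exact inter_nonempty_of_connectedComponentIn_ne hW (hFW hy) (hFW hz) hyz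

variable {ι G X : Type*} [Group G] [MulAction G X] {l : Filter ι} {g : ι → G} {x : X}

lemma isPreconnected_preimage_smul [TopologicalSpace X] [ContinuousConstSMul G X] {W : Set X}
    (hW : IsPreconnected W) (a : G) : IsPreconnected ((a • ·) ⁻¹' W) :=
  (Homeomorph.smul a).isPreconnected_preimage.2 hW

lemma Crosses.mem_kuratowskiLiminf_smul [TopologicalSpace X] [LocallyConnectedSpace X]
    [ContinuousConstSMul G X] {C F : Set X} (hCF : Crosses C F)
    (hF : Tendsto (fun i => g i • F) l (𝓝 x).smallSets) :
    x ∈ kuratowskiLiminf l (fun i => g i • C) := by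
  refine mem_kuratowskiLiminf_iff_isPreconnected.2 fun W hWo hxW hWc => ?_
  filter_upwards [tendsto_smallSets_iff.1 hF W (hWo.mem_nhds hxW)] with i hi
  exact image_inter_nonempty_iff.2 <|
    hCF.inter_nonempty_of_subset (isPreconnected_preimage_smul hWc (g i)) (image_subset_iff.1 hi)

lemma mem_kuratowskiLiminf_smul_of_crosses_chain [PseudoMetricSpace X] [LocallyConnectedSpace X]
    [ContinuousConstSMul G X] {𝓐 : Set (Set X)} (hnull : NullFam 𝓐)
    (hclosed : ∀ C ∈ 𝓐, IsClosed C) (hbdd : ∀ C ∈ 𝓐, Bornology.IsBounded C)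
    (hinv : ∀ a : G, ∀ C ∈ 𝓐, a • C ∈ 𝓐) {c : ℕ → Set X} {m : ℕ} (hc : ∀ j < m, c (j + 1) ∈ 𝓐)
    (hcross : ∀ j < m, Crosses (c j) (c (j + 1)))
    (hxc : ∀ j < m, ∀ᶠ i in l, x ∉ g i • c (j + 1))
    (hx : x ∈ kuratowskiLiminf l (fun i => g i • c m)) :
    x ∈ kuratowskiLiminf l (fun i => g i • c 0) := by
  induction m with
  | zero => exact hx
  | succ m ih =>
    have hmem : ∀ i, g i • c (m + 1) ∈ 𝓐 := fun i => hinv _ _ (hc m m.lt_succ_self)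
    have hshrink : Tendsto (fun i => g i • c (m + 1)) l (𝓝 x).smallSets :=
      tendsto_smallSets_of_tendsto_diam (fun i => hbdd _ (hmem i))
        (hnull.tendsto_diam hclosed hmem (hxc m m.lt_succ_self) hx) hx
    exact ih (fun j hj => hc j (by omega)) (fun j hj => hcross j (by omega))
      (fun j hj => hxc j (by omega))
      ((hcross m m.lt_succ_self).mem_kuratowskiLiminf_smul hshrink)

lemma CrossSeqAvoiding.mono {X : Type*} [TopologicalSpace X] {𝓐 : Set (Set X)} {A B D D' : Set X}
    (h : CrossSeqAvoiding 𝓐 A B D) (hD : D' ⊆ D) : CrossSeqAvoiding 𝓐 A B D' := by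
  obtain ⟨m, hm, c, hA, hB, hmem, hcross, havoid⟩ := h
  exact ⟨m, hm, c, hA, hB, hmem, hcross, fun i hi hi' =>
    subset_eq_empty (inter_subset_inter_right _ hD) (havoid i hi hi')⟩

end Crosses

namespace ConvSeqOn

section Maps

variable {X : Type*} [TopologicalSpace X] {A : Set X} {S T : ℕ → X → X} {n p x : X}

lemma comp_tendsto (h : ConvSeqOn A T n p) {φ : ℕ → ℕ} (hφ : Tendsto φ atTop atTop) :
    ConvSeqOn A (fun i => T (φ i)) n p :=
  ⟨h.1, h.2.1, fun C hCA hC hnC U hU hpU => hφ.eventually (h.2.2 C hCA hC hnC U hU hpU)⟩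

lemma tendsto_apply (h : ConvSeqOn A T n p) (hx : x ∈ A) (hxn : x ≠ n) :
    Tendsto (fun i => T i x) atTop (𝓝 p) := by
  refine tendsto_nhds.2 fun U hU hpU => ?_
  filter_upwards [h.2.2 {x} (singleton_subset_iff.2 hx) isCompact_singleton hxn.symm U hU hpU]
    with i hi
  exact hi (mem_image_of_mem _ rfl)

lemma accPt_attractor (h : ConvSeqOn A T n p) (hA : 2 < A.encard) (hmaps : ∀ i, MapsTo (T i) A A)
    (hinj : ∀ i, InjOn (T i) A) : AccPt p (𝓟 A) := by
  obtain ⟨y, z, hy, hz, hyz⟩ : ∃ y z, y ∈ A \ {n} ∧ z ∈ A \ {n} ∧ y ≠ z := by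
    refine one_lt_encard_iff.1 (lt_of_add_lt_add_right (a := 1) ?_)
    rwa [encard_sdiff_singleton_add_one h.1, one_add_one_eq_two]
  refine accPt_iff_nhds.2 fun U hU => ?_
  obtain ⟨i, hyU, hzU⟩ := (((h.tendsto_apply hy.1 hy.2).eventually_mem hU).and
    ((h.tendsto_apply hz.1 hz.2).eventually_mem hU)).exists
  by_cases hyp : T i y = p
  · exact ⟨T i z, ⟨hzU, hmaps i hz.1⟩, fun hzp => hyz (hinj i hy.1 hz.1 (hyp.trans hzp.symm))⟩
  · exact ⟨T i y, ⟨hyU, hmaps i hy.1⟩, hyp⟩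

lemma of_rightInvOn [T2Space X] (h : ConvSeqOn A T n p) (hA : IsCompact A)
    (hmaps : ∀ i, MapsTo (S i) A A) (hinv : ∀ i, RightInvOn (S i) (T i) A) :
    ConvSeqOn A S p n := by
  obtain ⟨hn, hp, hconv⟩ := h
  refine ⟨hp, hn, fun C hCA hC hpC U hU hnU => ?_⟩
  filter_upwards [hconv (A \ U) sdiff_subset (hA.diff hU) (fun hn => hn.2 hnU) Cᶜ
    hC.isClosed.isOpen_compl hpC] with i hi
  rintro _ ⟨y, hy, rfl⟩
  by_contra hyU
  exact hi ⟨S i y, ⟨hmaps i (hCA hy), hyU⟩, hinv i (hCA hy)⟩ hy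

end Maps

variable {G X : Type*} [Group G] [MulAction G X] {f g : ℕ → G} {A B C : Set X} {n n' p q x : X}

lemma inv_smul [TopologicalSpace X] [T2Space X] (h : ConvSeqOn A (fun i (y : X) => f i • y) n p)
    (hA : IsCompact A) (hf : ∀ i, f i • A = A) :
    ConvSeqOn A (fun i (y : X) => (f i)⁻¹ • y) p n :=
  h.of_rightInvOn hA (fun i => mapsTo_iff_image_subset.2 (inv_smul_eq_iff.2 (hf i).symm).subset)
    fun i y _ => smul_inv_smul (f i) y

lemma inter_eq_singleton [TopologicalSpace X] [T2Space X]
    (hcA : ConvSeqOn A (fun i (y : X) => f i • y) n p)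
    (hcB : ConvSeqOn B (fun i (y : X) => f i • y) n' p) (hA : IsCompact A) (hB : IsCompact B)
    (hfA : ∀ i, f i • A = A) (hfB : ∀ i, f i • B = B) (hne : n ≠ n') : A ∩ B = {p} := by
  refine Subset.antisymm (fun z ⟨hzA, hzB⟩ => ?_) (singleton_subset_iff.2 ⟨hcA.2.1, hcB.2.1⟩)
  by_contra hzp
  exact hne (tendsto_nhds_unique ((hcA.inv_smul hA hfA).tendsto_apply hzA hzp)
    ((hcB.inv_smul hB hfB).tendsto_apply hzB hzp))

lemma mem_kuratowskiLiminf_smul_of_crosses [TopologicalSpace X] [T2Space X]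
    [LocallyConnectedSpace X] [ContinuousConstSMul G X]
    (h : ConvSeqOn B (fun i (y : X) => g i • y) p x) (hB : IsCompact B)
    (hg : ∀ i, g i • B = B) (hB2 : 2 < B.encard) (hC : IsClosed C) (hpC : p ∉ C)
    (hCB : Crosses C B) : x ∈ kuratowskiLiminf atTop (fun i => g i • C) := by
  refine mem_kuratowskiLiminf_iff_isPreconnected.2 fun W hWo hxW hWc => ?_
  have hW : W ∈ 𝓝 x := hWo.mem_nhds hxW
  rcases hCB with ⟨y, hyC, hyB⟩ | ⟨⟨-, y, hy, z, hz, hyz⟩, -⟩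
  · have hyp : y ≠ p := ne_of_mem_of_not_mem hyC hpC
    exact ((h.tendsto_apply hyB hyp).eventually_mem hW).mono fun i hi =>
      ⟨g i • y, smul_mem_smul_set hyC, hi⟩
  obtain ⟨k, hkB, hkp⟩ : ∃ k ∈ B, connectedComponentIn Cᶜ k ≠ connectedComponentIn Cᶜ p := by
    by_contra! hall
    exact hyz ((hall y hy).trans (hall z hz).symm)
  have haccPt : AccPt x (𝓟 B) := h.accPt_attractor hB2
    (fun i => mapsTo_iff_image_subset.2 (hg i).subset) fun i => (MulAction.injective (g i)).injOn
  obtain ⟨r, ⟨hrW, hrB⟩, hrx⟩ := accPt_iff_nhds.1 haccPt W hW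
  have hpcomp : connectedComponentIn Cᶜ p ∈ 𝓝 p :=
    hC.isOpen_compl.connectedComponentIn.mem_nhds (mem_connectedComponentIn hpC)
  -- `(g i)⁻¹ • r` tends to `p`, so `C` separates it from `k`, while `g i` moves both into `W`.
  filter_upwards [(h.tendsto_apply hkB (ne_of_apply_ne _ hkp)).eventually_mem hW,
    ((h.inv_smul hB hg).tendsto_apply hrB hrx).eventually_mem hpcomp] with i hkW hrp
  have hrW' : (g i)⁻¹ • r ∈ (g i • ·) ⁻¹' W := by rwa [mem_preimage, smul_inv_smul]
  exact image_inter_nonempty_iff.2 <| inter_nonempty_of_connectedComponentIn_ne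
    (isPreconnected_preimage_smul hWc (g i)) hkW hrW' (connectedComponentIn_eq hrp ▸ hkp)

lemma mem_of_crossSeqAvoiding [MetricSpace X] [LocallyConnectedSpace X] [ContinuousConstSMul G X]
    {𝓐 : Set (Set X)} (h : ConvSeqOn B (fun i (y : X) => g i • y) p x)
    (hcompact : ∀ C ∈ 𝓐, IsCompact C) (hinv : ∀ a : G, ∀ C ∈ 𝓐, a • C ∈ 𝓐) (hnull : NullFam 𝓐)
    (hgA : ∀ i, g i • A = A) (hgB : ∀ i, g i • B = B) (hB : 2 < B.encard)
    (hq : Tendsto (fun i => (g i)⁻¹ • x) atTop (𝓝 q)) (hAB : CrossSeqAvoiding 𝓐 A B {q, p}) :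
    x ∈ A := by
  obtain ⟨m, hm, c, rfl, rfl, hc, hcross, havoid⟩ := hAB
  have hclosed : ∀ C ∈ 𝓐, IsClosed C := fun C hC => (hcompact C hC).isClosed
  have hqc : ∀ j < m, q ∉ c (j + 1) := fun j hj hqj =>
    (havoid (j + 1) (by omega) hj).subset ⟨hqj, by simp⟩
  have hpc : p ∉ c m := fun hpm => (havoid m hm le_rfl).subset ⟨hpm, by simp⟩
  have hxc : ∀ j < m, ∀ᶠ i in atTop, x ∉ g i • c (j + 1) := by
    intro j hj
    filter_upwards [hq.eventually_mem
      ((hclosed _ (hc (j + 1) (by omega))).isOpen_compl.mem_nhds (hqc j hj))] with i hi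
    rwa [mem_smul_set_iff_inv_smul_mem]
  have hlast : x ∈ kuratowskiLiminf atTop (fun i => g i • c m) :=
    h.mem_kuratowskiLiminf_smul_of_crosses (hcompact _ (hc (m + 1) le_rfl)) hgB hB
      (hclosed _ (hc m (by omega))) hpc (hcross m le_rfl)
  have hfirst : x ∈ kuratowskiLiminf atTop (fun i => g i • c 0) :=
    mem_kuratowskiLiminf_smul_of_crosses_chain hnull hclosed
      (fun C hC => (hcompact C hC).isBounded) hinv (fun j hj => hc (j + 1) (by omega))
      (fun j hj => hcross j hj.le) hxc hlast
  simpa only [hgA, kuratowskiLiminf_const, (hclosed _ (hc 0 (by omega))).closure_eq] using hfirst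

lemma repeller_eq_of_repeller_ne_attractor [MetricSpace X] [LocallyConnectedSpace X]
    [ContinuousConstSMul G X] {𝓐 : Set (Set X)}
    (hcA : ConvSeqOn A (fun i (y : X) => f i • y) n p)
    (hcB : ConvSeqOn B (fun i (y : X) => f i • y) n' p)
    (hcompact : ∀ C ∈ 𝓐, IsCompact C) (hinv : ∀ a : G, ∀ C ∈ 𝓐, a • C ∈ 𝓐) (hnull : NullFam 𝓐)
    (hA : A ∈ 𝓐) (hB : B ∈ 𝓐) (hB2 : 2 < B.encard)
    (hAB : A ∩ B = {p} → ∀ b ∈ B, b ≠ p → CrossSeqAvoiding 𝓐 A B {b, p})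
    (hfA : ∀ i, f i • A = A) (hfB : ∀ i, f i • B = B) (hn'p : n' ≠ p) : n' = n := by
  by_contra hne
  have hinter : A ∩ B = {p} :=
    hcA.inter_eq_singleton hcB (hcompact A hA) (hcompact B hB) hfA hfB (Ne.symm hne)
  obtain ⟨q, hqB, φ, hφ, hq⟩ := (hcompact B hB).tendsto_subseq (x := fun i => f i • n')
    fun i => (hfB i).subset (smul_mem_smul_set hcB.1)
  have hcross : CrossSeqAvoiding 𝓐 A B {q, p} := by
    obtain rfl | hqp := eq_or_ne q p
    · exact (hAB hinter n' hcB.1 hn'p).mono (by simp)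
    · exact hAB hinter q hqB hqp
  have hn'A : n' ∈ A :=
    ((hcB.inv_smul (hcompact B hB) hfB).comp_tendsto hφ.tendsto_atTop).mem_of_crossSeqAvoiding
      hcompact hinv hnull (fun i => inv_smul_eq_iff.2 (hfA (φ i)).symm)
      (fun i => inv_smul_eq_iff.2 (hfB (φ i)).symm) hB2
      (by simpa only [inv_inv, Function.comp_def] using hq) hcross
  exact hn'p (hinter.subset ⟨hn'A, hcB.1⟩)

end ConvSeqOn

theorem same_attractor_same_repeller_general {G X : Type*} [Group G] [MulAction G X]
    [MetricSpace X] [LocallyConnectedSpace X] [ContinuousConstSMul G X] {𝓐 : Set (Set X)}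
    (hcompact : ∀ C ∈ 𝓐, IsCompact C) (hinv : ∀ g : G, ∀ C ∈ 𝓐, g • C ∈ 𝓐) (hnull : NullFam 𝓐)
    {A B : Set X} (hA : A ∈ 𝓐) (hB : B ∈ 𝓐) (hA2 : 2 < A.encard) (hB2 : 2 < B.encard)
    {f : ℕ → G} (hfA : ∀ i, f i ∈ stab G A) (hfB : ∀ i, f i ∈ stab G B) {n p n' : X}
    (hAB : A ∩ B = {p} → ∀ b ∈ B, b ≠ p → CrossSeqAvoiding 𝓐 A B {b, p})
    (hBA : B ∩ A = {p} → ∀ a ∈ A, a ≠ p → CrossSeqAvoiding 𝓐 B A {a, p})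
    (hcA : ConvSeqOn A (fun i (x : X) => f i • x) n p)
    (hcB : ConvSeqOn B (fun i (x : X) => f i • x) n' p) :
    n' = n := by
  by_cases hn'p : n' = p
  · by_cases hnp : n = p
    · exact hn'p.trans hnp.symm
    · exact (hcB.repeller_eq_of_repeller_ne_attractor hcA hcompact hinv hnull hB hA hA2 hBA
        hfB hfA hnp).symm
  · exact hcA.repeller_eq_of_repeller_ne_attractor hcB hcompact hinv hnull hA hB hB2 hAB
      hfA hfB hn'p

/-- Lemma: if `(f_i) ⊆ st(A) ∩ st(B)` acts as a convergence sequence on both `A` and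
`B` with the same attractor `p`, then the repellers coincide. -/
theorem same_attractor_same_repeller {G X : Type*} [Group G] [MulAction G X]
    [MetricSpace X] [CompactSpace X] [ConnectedSpace X] [LocallyConnectedSpace X]
    [ContinuousConstSMul G X]
    (hcut : ∀ x : X, IsPreconnected ({x}ᶜ : Set X))
    (𝓐 : Set (Set X)) (h : IsLocalConvPairing G 𝓐)
    (A B : Set X) (hA : A ∈ 𝓐) (hB : B ∈ 𝓐)
    (f : ℕ → G) (hfA : ∀ i, f i ∈ stab G A) (hfB : ∀ i, f i ∈ stab G B)
    (n p n' : X)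
    (hcA : ConvSeqOn A (fun i (x : X) => f i • x) n p)
    (hcB : ConvSeqOn B (fun i (x : X) => f i • x) n' p) :
    n' = n := by
  have hconn : ∀ A ∈ 𝓐, ∀ B ∈ 𝓐, A ∩ B = {p} → ∀ b ∈ B, b ≠ p → CrossSeqAvoiding 𝓐 A B {b, p} :=
    fun A hA B hB hAB => (h.connect A hA B hB (by simp [hAB])).1 p hAB
  exact same_attractor_same_repeller_general (fun C hC => (h.closed C hC).isCompact) h.invariant
    h.null hA hB (h.big A hA) (h.big B hB) hfA hfB (hconn A hA B hB) (hconn B hB A hA) hcA hcB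
end

section
/- Let (G, 𝓐) be a local convergence pairing on a Peano continuum X without cut points and let A, B ∈ 𝓐. If (g_i) ⊆ st(A) acts as a convergence sequence on A with attractor p and repeller n, then there exists a subsequence (h_i) of (g_i) such that for every compact C ⊆ B \ {n} and every open neighborhood U of p, h_i(C) ⊆ U for all sufficiently large i. -/
/-!
Since the family is null and stabilizers are convergence groups, a diagonal argument passes to a
subsequence for which every member `C` either shrinks to a point or is carried onto a fixed set, as
a convergence sequence on `C`; the same is arranged for the inverses, which interchange repeller and
attractor. In both cases the limit point is the attractor of `C`.

The core is that all members have the same attractor. Crossing sequences join any two members, so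
let `C` and `D` cross.
* If they separate each other, a small connected neighbourhood of either attractor meets the
  translates of the other set, which forces equality.
* If they meet in a point that is not a repeller, the orbit of that point has both limits. Otherwise
  they meet in at most the two repellers, and crossing sequences avoiding prescribed points rule out
  different attractors when the repellers differ or one of the two sets shrinks.
* There remain sets meeting exactly in a common repeller `s`. A crossing sequence from `C` to `D`
  that avoids `s` and some `q ∈ D` contains a member with the attractor of `D` and a repeller other
  than `s`. It meets `D` in a point other than `q` that is eventually mapped to the attractor. Using
  this point as a new `q` gives two points with the same image.

So `B` has attractor `p`, and the same result for the inverses shows that if `B` does not shrink,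
its repeller is `n`.
-/

open Set Filter Topology Pointwise

lemma exists_mem_ne_ne {X : Type*} {C : Set X} (hC : 2 < C.encard) (a b : X) :
    ∃ x ∈ C, x ≠ a ∧ x ≠ b := by
  by_contra! hsub
  have hpair : C ⊆ {a, b} := fun x hx => or_iff_not_imp_left.2 (hsub x hx)
  exact hC.not_ge ((encard_le_encard hpair).trans (encard_insert_le _ _ |>.trans (by
    rw [encard_singleton, one_add_one_eq_two])))

/-! ### Convergence of translates -/

section Convergence

variable {ι G X : Type*} [Group G] [MulAction G X] [TopologicalSpace X]
  {g : ι → G} {l l' : Filter ι} {A B C C' D D' K U : Set X} {a b p r s x y z : X}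

/-- The translates `g i • C` shrink to the point `z` along `l`. -/
def ShrinksTo (g : ι → G) (l : Filter ι) (C : Set X) (z : X) : Prop :=
  Tendsto (fun i => g i • C) l (𝓝 z).smallSets

/-- Along `l` the maps `g i` carry `C` onto a fixed set `C'` and act on `C` as a convergence
sequence with repeller `r ∈ C` and attractor `a ∈ C'`. Unlike in `ConvSeqOn` the set `C'` may differ
from `C`, as happens for the members of the family that the `g i` do not stabilize. -/
structure ConvergesOn (g : ι → G) (l : Filter ι) (C C' : Set X) (r a : X) : Prop where
  smul_eq : ∀ᶠ i in l, g i • C = C'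
  repeller_mem : r ∈ C
  attractor_mem : a ∈ C'
  shrinksTo : ∀ K ⊆ C, IsCompact K → r ∉ K → ShrinksTo g l K a

/-- The set `C` has attractor `a` along `l`: either its translates shrink to `a`, or the `g i`
converge on `C` with attractor `a`. -/
def HasAttractor (g : ι → G) (l : Filter ι) (C : Set X) (a : X) : Prop :=
  ShrinksTo g l C a ∨ ∃ C' r, ConvergesOn g l C C' r a

namespace ShrinksTo

lemma mono (hC : ShrinksTo g l C z) (h : K ⊆ C) : ShrinksTo g l K z :=
  hC.smallSets_mono (Eventually.of_forall fun _ => smul_set_mono h)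

lemma tendsto (hC : ShrinksTo g l C z) (hx : x ∈ C) : Tendsto (fun i => g i • x) l (𝓝 z) :=
  Tendsto.of_smallSets hC (Eventually.of_forall fun _ => smul_mem_smul_set hx)

lemma eventually_subset (hC : ShrinksTo g l C z) (hU : U ∈ 𝓝 z) : ∀ᶠ i in l, g i • C ⊆ U :=
  tendsto_smallSets_iff.1 hC U hU

lemma map {κ : Type*} {m : Filter κ} {φ : κ → ι} (hC : ShrinksTo (g ∘ φ) m C z) :
    ShrinksTo g (map φ m) C z :=
  tendsto_map'_iff.2 hC

lemma const_mul [ContinuousConstSMul G X] (hC : ShrinksTo g l C z) (γ : G) :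
    ShrinksTo (fun i => γ * g i) l C (γ • z) := by
  refine tendsto_smallSets_iff.2 fun U hU => ?_
  filter_upwards [hC.eventually_subset ((continuous_const_smul γ).continuousAt hU)] with i hi
  rw [mul_smul, smul_set_subset_iff]
  exact hi

lemma eq_of_mem [T2Space X] [l.NeBot] (hC : ShrinksTo g l C a) (hD : ShrinksTo g l D b)
    (hxC : x ∈ C) (hxD : x ∈ D) : a = b :=
  tendsto_nhds_unique (hC.tendsto hxC) (hD.tendsto hxD)

end ShrinksTo

namespace ConvergesOn

lemma mono_filter (hC : ConvergesOn g l C C' r a) (hl : l' ≤ l) : ConvergesOn g l' C C' r a where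
  smul_eq := hC.smul_eq.filter_mono hl
  repeller_mem := hC.repeller_mem
  attractor_mem := hC.attractor_mem
  shrinksTo K hK hKc hr := (hC.shrinksTo K hK hKc hr).mono_left hl

lemma map {κ : Type*} {m : Filter κ} {φ : κ → ι} (hC : ConvergesOn (g ∘ φ) m C C' r a) :
    ConvergesOn g (map φ m) C C' r a where
  smul_eq := hC.smul_eq
  repeller_mem := hC.repeller_mem
  attractor_mem := hC.attractor_mem
  shrinksTo K hK hKc hr := (hC.shrinksTo K hK hKc hr).map

lemma const_mul [ContinuousConstSMul G X] (hC : ConvergesOn g l C C' r a) (γ : G) :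
    ConvergesOn (fun i => γ * g i) l C (γ • C') r (γ • a) where
  smul_eq := hC.smul_eq.mono fun i hi => by rw [mul_smul, hi]
  repeller_mem := hC.repeller_mem
  attractor_mem := smul_mem_smul_set hC.attractor_mem
  shrinksTo K hK hKc hr := (hC.shrinksTo K hK hKc hr).const_mul γ

lemma inv [T2Space X] (hC : ConvergesOn g l C C' r a) (hCc : IsCompact C) :
    ConvergesOn g⁻¹ l C' C a r where
  smul_eq := hC.smul_eq.mono fun i hi => by rw [Pi.inv_apply, ← hi, inv_smul_smul]
  repeller_mem := hC.attractor_mem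
  attractor_mem := hC.repeller_mem
  shrinksTo K hK hKc ha := by
    -- Off `U` the points of `C` are eventually moved out of `K`, so `K` comes from `C ∩ U`.
    refine tendsto_smallSets_iff.2 fun U hU => ?_
    have hfar : ShrinksTo g l (C \ interior U) a :=
      hC.shrinksTo _ sdiff_subset (hCc.diff isOpen_interior)
        fun hr => hr.2 (mem_interior_iff_mem_nhds.2 hU)
    filter_upwards [hfar.eventually_subset (hKc.isClosed.isOpen_compl.mem_nhds ha), hC.smul_eq]
      with i hi himage
    rintro _ ⟨y, hy, rfl⟩
    by_contra hyU
    have hyC : (g i)⁻¹ • y ∈ C := by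
      rw [← mem_smul_set_iff_inv_smul_mem, himage]
      exact hK hy
    exact hi (mem_smul_set_iff_inv_smul_mem.2 ⟨hyC, fun h => hyU (interior_subset h)⟩) hy

lemma tendsto (hC : ConvergesOn g l C C' r a) (hx : x ∈ C) (hxr : x ≠ r) :
    Tendsto (fun i => g i • x) l (𝓝 a) :=
  (hC.shrinksTo {x} (singleton_subset_iff.2 hx) isCompact_singleton hxr.symm).tendsto rfl

lemma isClosed_image [ContinuousConstSMul G X] [l.NeBot] (hC : ConvergesOn g l C C' r a)
    (hCc : IsClosed C) : IsClosed C' := by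
  obtain ⟨i, hi⟩ := hC.smul_eq.exists
  exact hi ▸ hCc.smul (g i)

lemma encard_image [l.NeBot] (hC : ConvergesOn g l C C' r a) : C'.encard = C.encard := by
  obtain ⟨i, hi⟩ := hC.smul_eq.exists
  rw [← hi, encard_smul_set]

lemma mem_image_of_tendsto [ContinuousConstSMul G X] [l.NeBot] (hC : ConvergesOn g l C C' r a)
    (hCc : IsClosed C) (hx : x ∈ C) (hz : Tendsto (fun i => g i • x) l (𝓝 z)) : z ∈ C' :=
  (hC.isClosed_image hCc).mem_of_tendsto hz
    (hC.smul_eq.mono fun _ hi => hi ▸ smul_mem_smul_set hx)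

lemma eventually_smul_inter (hC : ConvergesOn g l C C' r a) (hD : ConvergesOn g l D D' s b) :
    ∀ᶠ i in l, g i • (C ∩ D) = C' ∩ D' := by
  filter_upwards [hC.smul_eq, hD.smul_eq] with i hiC hiD
  rw [smul_set_inter, hiC, hiD]

lemma inter_nonempty [l.NeBot] (hC : ConvergesOn g l C C' r a) (hD : ConvergesOn g l D D' s b)
    (h : (C' ∩ D').Nonempty) : (C ∩ D).Nonempty := by
  obtain ⟨i, hi⟩ := (hC.eventually_smul_inter hD).exists
  exact smul_set_nonempty.1 (hi ▸ h)

lemma tendsto_cofinite [T2Space X] (hC : ConvergesOn g l C C' r a) (hC2 : 2 < C.encard) :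
    Tendsto g l cofinite := by
  -- An element taken infinitely often would send two points of `C` to `a`.
  refine le_cofinite_iff_eventually_ne.2 fun γ => eventually_map.2 ?_
  by_contra hγ
  have hfreq : ∃ᶠ i in l, g i = γ := by simpa only [not_eventually, not_not] using hγ
  have hsend : ∀ w ∈ C, w ≠ r → γ • w = a := fun w hw hwr => by
    by_contra hne
    obtain ⟨i, rfl, hi⟩ :=
      (hfreq.and_eventually ((hC.tendsto hw hwr).eventually_ne (Ne.symm hne))).exists
    exact hi rfl
  obtain ⟨x, hx, hxr, -⟩ := exists_mem_ne_ne hC2 r r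
  obtain ⟨y, hy, hyr, hyx⟩ := exists_mem_ne_ne hC2 r x
  exact hyx (MulAction.injective γ ((hsend y hy hyr).trans (hsend x hx hxr).symm))

lemma accPt_repeller [T2Space X] [l.NeBot] (hC : ConvergesOn g l C C' r a) (hCc : IsCompact C)
    (hC2 : 2 < C.encard) : AccPt r (𝓟 C) := by
  -- Two points of `C'` other than `a` are pulled back close to `r`, and only one can land on `r`.
  rw [accPt_iff_nhds]
  intro U hU
  have hinv := hC.inv hCc
  rw [← hC.encard_image] at hC2
  obtain ⟨y, hy, hya, -⟩ := exists_mem_ne_ne hC2 a a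
  obtain ⟨z, hz, hza, hzy⟩ := exists_mem_ne_ne hC2 a y
  obtain ⟨i, ⟨hyU, hzU⟩, himage⟩ := (((hinv.tendsto hy hya).eventually_mem hU).and
    ((hinv.tendsto hz hza).eventually_mem hU) |>.and hinv.smul_eq).exists
  by_cases hyr : g⁻¹ i • y = r
  · exact ⟨_, ⟨hzU, himage ▸ smul_mem_smul_set hz⟩,
      fun hzr => hzy (MulAction.injective (g⁻¹ i) (hzr.trans hyr.symm))⟩
  · exact ⟨_, ⟨hyU, himage ▸ smul_mem_smul_set hy⟩, hyr⟩

lemma inter_subset_pair [T2Space X] [l.NeBot] (hC : ConvergesOn g l C C' r a)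
    (hD : ConvergesOn g l D D' s b) (hab : a ≠ b) : C ∩ D ⊆ {r, s} := by
  rintro x ⟨hxC, hxD⟩
  by_contra! hx
  obtain ⟨hxr, hxs⟩ := not_or.1 hx
  exact hab (tendsto_nhds_unique (hC.tendsto hxC hxr) (hD.tendsto hxD hxs))

lemma inter_subset_singleton [T2Space X] [l.NeBot] (hC : ConvergesOn g l C C' r a)
    (hD : ShrinksTo g l D b) (hab : a ≠ b) : C ∩ D ⊆ {r} := by
  rintro x ⟨hxC, hxD⟩
  by_contra hxr
  exact hab (tendsto_nhds_unique (hC.tendsto hxC hxr) (hD.tendsto hxD))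

lemma eventually_smul_eq_attractor [T2Space X] [ContinuousConstSMul G X] [l.NeBot]
    (hC : ConvergesOn g l C C' r a) (hD : ConvergesOn g l D D' s b) (hCc : IsCompact C)
    (hDc : IsCompact D) (hab : a ≠ b) (hrs : r ≠ s) (hs : s ∈ C) : ∀ᶠ i in l, g i • s = a := by
  have haD' : a ∈ D' :=
    hD.mem_image_of_tendsto hDc.isClosed hD.repeller_mem (hC.tendsto hs hrs.symm)
  have hlim : Tendsto (fun i => g⁻¹ i • a) l (𝓝 s) := (hD.inv hDc).tendsto haD' hab
  filter_upwards [hlim.eventually_ne hrs.symm,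
    (hC.inv hCc).eventually_smul_inter (hD.inv hDc)] with i hir hi
  have hmem : g⁻¹ i • a ∈ C ∩ D := hi ▸ smul_mem_smul_set ⟨hC.attractor_mem, haD'⟩
  exact (inv_smul_eq_iff.1 ((hC.inter_subset_pair hD hab hmem).resolve_left hir)).symm

lemma exists_eventually_smul_eq [T2Space X] [l.NeBot] (hC : ConvergesOn g l C C' r a)
    (hD : ConvergesOn g l D D' s a) (hCc : IsCompact C) (hDc : IsCompact D) (hrs : r ≠ s) :
    ∃ x ∈ C ∩ D, ∀ᶠ i in l, g i • x = a := by
  obtain ⟨x, hx⟩ := hC.inter_nonempty hD ⟨a, hC.attractor_mem, hD.attractor_mem⟩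
  refine ⟨x, hx, (hC.eventually_smul_inter hD).mono fun i hi => ?_⟩
  have hmem : g i • x ∈ ({a, a} : Set X) :=
    (hC.inv hCc).inter_subset_pair (hD.inv hDc) hrs (hi ▸ smul_mem_smul_set hx)
  simpa only [pair_eq_singleton, mem_singleton_iff] using hmem

end ConvergesOn

namespace HasAttractor

lemma mono_filter (hC : HasAttractor g l C a) (hl : l' ≤ l) : HasAttractor g l' C a :=
  hC.imp (fun h => h.mono_left hl) fun ⟨C', r, h⟩ => ⟨C', r, h.mono_filter hl⟩

lemma map {κ : Type*} {m : Filter κ} {φ : κ → ι} (hC : HasAttractor (g ∘ φ) m C a) :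
    HasAttractor g (map φ m) C a :=
  hC.imp ShrinksTo.map fun ⟨C', r, h⟩ => ⟨C', r, h.map⟩

lemma exists_mem_inter_tendsto [T2Space X] [l.NeBot] (hC : HasAttractor g l C a)
    (hCc : IsCompact C) (hC2 : 2 < C.encard) (hx : x ∈ C) (hU : U ∈ 𝓝 x) :
    ∃ y ∈ U ∩ C, Tendsto (fun i => g i • y) l (𝓝 a) := by
  obtain hC | ⟨C', r, hC⟩ := hC
  · exact ⟨x, ⟨mem_of_mem_nhds hU, hx⟩, hC.tendsto hx⟩
  by_cases hxr : x = r
  · subst hxr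
    obtain ⟨y, hy, hyr⟩ := accPt_iff_nhds.1 (hC.accPt_repeller hCc hC2) U hU
    exact ⟨y, hy, hC.tendsto hy.2 hyr⟩
  · exact ⟨x, ⟨mem_of_mem_nhds hU, hx⟩, hC.tendsto hx hxr⟩

/-- Two points of `C` in different components of `Dᶜ` are attracted into a small connected
neighbourhood of `a`, which the translate of `D` must therefore meet. -/
lemma eventually_inter_nonempty_of_sepSet [T2Space X] [LocallyConnectedSpace X]
    [ContinuousConstSMul G X] [l.NeBot] (hC : HasAttractor g l C a) (hCc : IsCompact C)
    (hC2 : 2 < C.encard) (hDc : IsClosed D) (hsep : SepSet D C) (hU : U ∈ 𝓝 a) :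
    ∀ᶠ i in l, (U ∩ g i • D).Nonempty := by
  obtain ⟨hCD, x, hx, y, hy, hxy⟩ := hsep
  have hmove : ∀ w ∈ C, ∃ w', connectedComponentIn Dᶜ w' = connectedComponentIn Dᶜ w ∧
      Tendsto (fun i => g i • w') l (𝓝 a) := fun w hw => by
    have hopen : IsOpen (connectedComponentIn Dᶜ w) := hDc.isOpen_compl.connectedComponentIn
    obtain ⟨w', ⟨hw', -⟩, hlim⟩ := hC.exists_mem_inter_tendsto hCc hC2 hw
      (hopen.mem_nhds (mem_connectedComponentIn (hCD hw)))
    exact ⟨w', (connectedComponentIn_eq hw').symm, hlim⟩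
  obtain ⟨x', hxx', hxlim⟩ := hmove x hx
  obtain ⟨y', hyy', hylim⟩ := hmove y hy
  obtain ⟨N, hNU, hNo, haN, hNc⟩ := locallyConnectedSpace_iff_subsets_isOpen_isConnected.1
    inferInstance a U hU
  filter_upwards [hxlim.eventually_mem (hNo.mem_nhds haN),
    hylim.eventually_mem (hNo.mem_nhds haN)] with i hxN hyN
  by_contra hempty
  have hdisj : (g i)⁻¹ • N ⊆ Dᶜ := fun w hw hwD =>
    hempty ⟨g i • w, hNU (mem_inv_smul_set_iff.1 hw), smul_mem_smul_set hwD⟩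
  have hconn : IsPreconnected ((g i)⁻¹ • N) :=
    hNc.isPreconnected.image _ (continuous_const_smul _).continuousOn
  have hsame : connectedComponentIn Dᶜ x' = connectedComponentIn Dᶜ y' :=
    connectedComponentIn_eq (hconn.subset_connectedComponentIn (mem_inv_smul_set_iff.2 hxN)
      hdisj (mem_inv_smul_set_iff.2 hyN))
  exact hxy (hxx'.symm.trans (hsame.trans hyy'))

lemma eq_of_sepSet_of_shrinksTo [T2Space X] [LocallyConnectedSpace X]
    [ContinuousConstSMul G X] [l.NeBot] (hC : HasAttractor g l C a) (hD : ShrinksTo g l D b)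
    (hCc : IsCompact C) (hC2 : 2 < C.encard) (hDc : IsClosed D) (hsep : SepSet D C) : a = b := by
  by_contra hab
  obtain ⟨U, V, hU, hV, haU, hbV, hUV⟩ := t2_separation hab
  obtain ⟨i, ⟨w, hwU, hwD⟩, hDV⟩ :=
    ((hC.eventually_inter_nonempty_of_sepSet hCc hC2 hDc hsep (hU.mem_nhds haU)).and
      (hD.eventually_subset (hV.mem_nhds hbV))).exists
  exact disjoint_left.1 hUV hwU (hDV hwD)

lemma mem_image_of_sepSet [T2Space X] [LocallyConnectedSpace X]
    [ContinuousConstSMul G X] [l.NeBot] (hC : HasAttractor g l C a)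
    (hD : ConvergesOn g l D D' s b) (hCc : IsCompact C) (hC2 : 2 < C.encard) (hDc : IsClosed D)
    (hsep : SepSet D C) : a ∈ D' := by
  rw [← (hD.isClosed_image hDc).closure_eq, mem_closure_iff_nhds]
  intro U hU
  obtain ⟨i, hmeet, hi⟩ :=
    ((hC.eventually_inter_nonempty_of_sepSet hCc hC2 hDc hsep hU).and hD.smul_eq).exists
  exact hi ▸ hmeet

lemma eq_of_sepSet_of_sepSet [T2Space X] [LocallyConnectedSpace X]
    [ContinuousConstSMul G X] [l.NeBot] (hC : HasAttractor g l C a) (hD : HasAttractor g l D b)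
    (hCc : IsCompact C) (hC2 : 2 < C.encard) (hDc : IsCompact D) (hD2 : 2 < D.encard)
    (hCD : SepSet C D) (hDC : SepSet D C) : a = b := by
  obtain hD' | ⟨D', s, hD'⟩ := id hD
  · exact hC.eq_of_sepSet_of_shrinksTo hD' hCc hC2 hDc.isClosed hDC
  obtain hC' | ⟨C', r, hC'⟩ := id hC
  · exact (hD.eq_of_sepSet_of_shrinksTo hC' hDc hD2 hCc.isClosed hCD).symm
  have haD' := hC.mem_image_of_sepSet hD' hCc hC2 hDc.isClosed hDC
  obtain ⟨w, hwC, hwD⟩ := hC'.inter_nonempty hD' ⟨a, hC'.attractor_mem, haD'⟩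
  exact (hCD.1 hwD hwC).elim

end HasAttractor

end Convergence

/-! ### Crossing families -/

section CrossingFamily

variable {X : Type*} [TopologicalSpace X] {𝓐 : Set (Set X)} {A B C D S : Set X} {a b : X}

lemma Crosses.symm (h : Crosses C D) : Crosses D C :=
  h.imp (fun hne => by rwa [inter_comm]) And.symm

namespace CrossSeqAvoiding

lemma symm (h : CrossSeqAvoiding 𝓐 C D S) : CrossSeqAvoiding 𝓐 D C S := by
  obtain ⟨k, hk, c, hc0, hck, hmem, hcross, hS⟩ := h
  refine ⟨k, hk, fun i => c (k + 1 - i), by simpa using hck, by simpa using hc0,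
    fun i _ => hmem _ (by omega), fun i hi => ?_, fun i hi1 hik => hS _ (by omega) (by omega)⟩
  have hi' := hcross (k - i) (by omega)
  rw [show k - i + 1 = k + 1 - i by omega, show k - i = k + 1 - (i + 1) by omega] at hi'
  exact hi'.symm

lemma exists_last {P : Set X → Prop} (h : CrossSeqAvoiding 𝓐 C D S)
    (first : ∀ F ∈ 𝓐, Disjoint F S → Crosses C F → P F)
    (step : ∀ E ∈ 𝓐, ∀ F ∈ 𝓐, Disjoint E S → Disjoint F S → P E → Crosses E F → P F) :
    ∃ E ∈ 𝓐, Disjoint E S ∧ P E ∧ Crosses E D := by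
  obtain ⟨k, hk, c, rfl, rfl, hmem, hcross, hS⟩ := h
  have hdisj : ∀ j, 1 ≤ j → j ≤ k → Disjoint (c j) S := fun j h1 hjk =>
    disjoint_iff_inter_eq_empty.2 (hS j h1 hjk)
  have hP : ∀ j, 1 ≤ j → j ≤ k → P (c j) := fun j h1 => by
    induction j, h1 using Nat.le_induction with
    | base => exact fun _ => first _ (hmem 1 (by omega)) (hdisj 1 le_rfl hk) (hcross 0 (by omega))
    | succ j h1 ih =>
      exact fun hjk => step _ (hmem j (by omega)) _ (hmem (j + 1) (by omega))
        (hdisj j h1 (by omega)) (hdisj _ (by omega) hjk) (ih (by omega)) (hcross j (by omega))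
  exact ⟨c k, hmem k (by omega), hdisj k hk le_rfl, hP k hk le_rfl, hcross k le_rfl⟩

end CrossSeqAvoiding

/-- The conditions of a local convergence pairing that involve neither the group nor the size of the
members: each member is compact with more than two points, and two members meeting in at most two
points are joined by a crossing sequence whose intermediate terms avoid the intersection. -/
structure IsCrossingFamily (𝓐 : Set (Set X)) : Prop where
  isCompact : ∀ A ∈ 𝓐, IsCompact A
  two_lt_encard : ∀ A ∈ 𝓐, 2 < A.encard
  connect : ∀ A ∈ 𝓐, ∀ B ∈ 𝓐, (A ∩ B).encard ≤ 2 →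
    (∀ c : X, A ∩ B = {c} → ∀ b ∈ B, b ≠ c → CrossSeqAvoiding 𝓐 A B {b, c}) ∧
    ((¬ ∃ c : X, A ∩ B = {c}) → CrossSeqAvoiding 𝓐 A B (A ∩ B))

namespace IsCrossingFamily

lemma crossSeqAvoiding_pair (h : IsCrossingFamily 𝓐) (hA : A ∈ 𝓐) (hB : B ∈ 𝓐)
    (hAB : A ∩ B ⊆ {a, b}) (ha : a ∈ B) (hb : b ∈ A ∩ B) (hab : a ≠ b) :
    CrossSeqAvoiding 𝓐 A B {a, b} := by
  obtain ⟨hone, htwo⟩ :=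
    h.connect A hA B hB ((encard_le_encard hAB).trans (encard_pair hab).le)
  by_cases haA : a ∈ A
  · have heq : A ∩ B = {a, b} := hAB.antisymm (pair_subset ⟨haA, ha⟩ hb)
    rw [heq] at htwo
    refine htwo fun ⟨c, hc⟩ => hab ?_
    have hsub : ({a, b} : Set X).Subsingleton := hc ▸ subsingleton_singleton
    exact hsub (mem_insert a {b}) (mem_insert_of_mem a rfl)
  · refine hone b (Subset.antisymm (fun x hx => (hAB hx).resolve_left ?_)
      (singleton_subset_iff.2 hb)) a ha hab
    exact fun hxa => haA (hxa ▸ hx.1)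

lemma crossSeqAvoiding_empty (h : IsCrossingFamily 𝓐) (hA : A ∈ 𝓐) (hB : B ∈ 𝓐)
    (hAB : A ∩ B = ∅) : CrossSeqAvoiding 𝓐 A B ∅ := by
  have hcon := (h.connect A hA B hB (by rw [hAB, encard_empty]; exact zero_le)).2
  rw [hAB] at hcon
  exact hcon fun ⟨c, hc⟩ => singleton_ne_empty c hc.symm

end IsCrossingFamily

end CrossingFamily

/-! ### Uniqueness of the attractor -/

section CommonAttractor

variable {ι G X : Type*} [Group G] [MulAction G X] [TopologicalSpace X] [T2Space X]
  [LocallyConnectedSpace X] [ContinuousConstSMul G X] {g : ι → G} {l : Filter ι} [l.NeBot]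
  {𝓐 : Set (Set X)} {C D C' D' S : Set X} {a b r s z : X}

namespace IsCrossingFamily

lemma inter_nonempty_of_crosses (h : IsCrossingFamily 𝓐) (hC𝓐 : C ∈ 𝓐) (hD𝓐 : D ∈ 𝓐)
    (hC : HasAttractor g l C a) (hD : HasAttractor g l D b) (hab : a ≠ b) (hCD : Crosses C D) :
    (C ∩ D).Nonempty :=
  hCD.resolve_right fun hsep => hab <|
    hC.eq_of_sepSet_of_sepSet hD (h.isCompact C hC𝓐) (h.two_lt_encard C hC𝓐) (h.isCompact D hD𝓐)
      (h.two_lt_encard D hD𝓐) hsep.1 hsep.2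

lemma shrinksTo_of_crosses (h : IsCrossingFamily 𝓐) (hC𝓐 : C ∈ 𝓐) (hD𝓐 : D ∈ 𝓐)
    (hC : HasAttractor g l C a) (hD : HasAttractor g l D b) (hCD : Crosses C D)
    (hlim : ∀ x ∈ C ∩ D, Tendsto (fun i => g i • x) l (𝓝 a))
    (hnot : ∀ D' s, ConvergesOn g l D D' s b → a ∉ D') : ShrinksTo g l D a := by
  have hmeet : a ≠ b → ∃ x ∈ C ∩ D, Tendsto (fun i => g i • x) l (𝓝 a) := fun hab =>
    (h.inter_nonempty_of_crosses hC𝓐 hD𝓐 hC hD hab hCD).imp fun x hx => ⟨hx, hlim x hx⟩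
  obtain hD | ⟨D', s, hD⟩ := id hD
  · obtain rfl | hab := eq_or_ne a b
    · exact hD
    obtain ⟨x, hx, hxa⟩ := hmeet hab
    exact (hab (tendsto_nhds_unique hxa (hD.tendsto hx.2))).elim
  · obtain ⟨x, hx, hxa⟩ := hmeet fun hab => hnot D' s hD (hab ▸ hD.attractor_mem)
    exact (hnot D' s hD
      (hD.mem_image_of_tendsto (h.isCompact D hD𝓐).isClosed hx.2 hxa)).elim

/-- If no intermediate term of the crossing sequence can be carried onto a set containing `a`, then
all of them shrink to `a`, and the last one meets `D` outside its repeller. -/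
lemma attractor_eq_of_crossSeqAvoiding (h : IsCrossingFamily 𝓐)
    (ht : ∀ E ∈ 𝓐, ∃ e, HasAttractor g l E e) (hC𝓐 : C ∈ 𝓐) (hD𝓐 : D ∈ 𝓐)
    (hC : HasAttractor g l C a) (hD : ConvergesOn g l D D' s b)
    (hseq : CrossSeqAvoiding 𝓐 C D S) (hs : s ∈ S)
    (hlim : ∀ x ∈ C, x ∉ S → Tendsto (fun i => g i • x) l (𝓝 a))
    (hnot : ∀ F ∈ 𝓐, Disjoint F S → ∀ F' t f, ConvergesOn g l F F' t f → a ∉ F') : a = b := by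
  by_contra hab
  obtain ⟨E, hE𝓐, hES, hE, hED⟩ := hseq.exists_last (P := fun F => ShrinksTo g l F a)
    (fun F hF𝓐 hFS hCF => by
      obtain ⟨f, hF⟩ := ht F hF𝓐
      exact h.shrinksTo_of_crosses hC𝓐 hF𝓐 hC hF hCF
        (fun x hx => hlim x hx.1 (disjoint_left.1 hFS hx.2))
        fun F' t => hnot F hF𝓐 hFS F' t f)
    (fun E hE𝓐 F hF𝓐 _ hFS hE hEF => by
      obtain ⟨f, hF⟩ := ht F hF𝓐
      exact h.shrinksTo_of_crosses hE𝓐 hF𝓐 (.inl hE) hF hEF (fun x hx => hE.tendsto hx.1)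
        fun F' t => hnot F hF𝓐 hFS F' t f)
  obtain ⟨x, hxE, hxD⟩ :=
    h.inter_nonempty_of_crosses hE𝓐 hD𝓐 (.inl hE) (.inr ⟨D', s, hD⟩) hab hED
  have hxs : x ≠ s := fun hxs => disjoint_left.1 hES hxE (hxs ▸ hs)
  exact hab (tendsto_nhds_unique (hE.tendsto hxE) (hD.tendsto hxD hxs))

lemma attractor_eq_of_repeller_mem (h : IsCrossingFamily 𝓐)
    (ht : ∀ E ∈ 𝓐, ∃ e, HasAttractor g l E e) (hC𝓐 : C ∈ 𝓐) (hD𝓐 : D ∈ 𝓐)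
    (hC : ConvergesOn g l C C' r a) (hD : ConvergesOn g l D D' s b) (hrs : r ≠ s) (hs : s ∈ C) :
    a = b := by
  by_contra hab
  -- The repeller `s` is eventually sent to `a`, so a member carried onto a set containing `a`
  -- contains `s`.
  have hsend : ∀ᶠ i in l, g i • s = a :=
    hC.eventually_smul_eq_attractor hD (h.isCompact C hC𝓐) (h.isCompact D hD𝓐) hab hrs hs
  have hseq : CrossSeqAvoiding 𝓐 C D {r, s} :=
    (h.crossSeqAvoiding_pair hD𝓐 hC𝓐 (inter_comm C D ▸ hC.inter_subset_pair hD hab)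
      hC.repeller_mem ⟨hD.repeller_mem, hs⟩ hrs).symm
  refine hab (h.attractor_eq_of_crossSeqAvoiding ht hC𝓐 hD𝓐 (.inr ⟨C', r, hC⟩) hD hseq
    (mem_insert_of_mem r rfl) (fun x hx hxS => hC.tendsto hx fun hxr => hxS (.inl hxr)) ?_)
  intro F _ hFS F' t f hF haF'
  obtain ⟨i, his, hi⟩ := (hsend.and hF.smul_eq).exists
  rw [← his, ← hi, smul_mem_smul_set_iff] at haF'
  exact disjoint_left.1 hFS haF' (mem_insert_of_mem r rfl)

lemma attractor_eq_of_repeller_ne (h : IsCrossingFamily 𝓐)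
    (ht : ∀ E ∈ 𝓐, ∃ e, HasAttractor g l E e) (hC𝓐 : C ∈ 𝓐) (hD𝓐 : D ∈ 𝓐)
    (hC : ConvergesOn g l C C' r a) (hD : ConvergesOn g l D D' s b) (hrs : r ≠ s)
    (hCD : (C ∩ D).Nonempty) : a = b := by
  by_contra hab
  obtain ⟨x, hx⟩ := hCD
  obtain rfl | rfl := hC.inter_subset_pair hD hab hx
  · exact hab (h.attractor_eq_of_repeller_mem ht hD𝓐 hC𝓐 hD hC hrs.symm hx.2).symm
  · exact hab (h.attractor_eq_of_repeller_mem ht hC𝓐 hD𝓐 hC hD hrs hx.1)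

lemma attractor_eq_of_crosses_shrinksTo (h : IsCrossingFamily 𝓐)
    (ht : ∀ E ∈ 𝓐, ∃ e, HasAttractor g l E e) (hC𝓐 : C ∈ 𝓐) (hD𝓐 : D ∈ 𝓐)
    (hC : ConvergesOn g l C C' r a) (hD : ShrinksTo g l D z) (hCD : Crosses C D) : a = z := by
  by_contra haz
  have hCc := h.isCompact C hC𝓐
  obtain ⟨x, hx⟩ :=
    h.inter_nonempty_of_crosses hC𝓐 hD𝓐 (.inr ⟨C', r, hC⟩) (.inl hD) haz hCD
  have hsub : C ∩ D ⊆ {r} := hC.inter_subset_singleton hD haz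
  obtain rfl : x = r := hsub hx
  have hzC' : z ∈ C' := hC.mem_image_of_tendsto hCc.isClosed hx.1 (hD.tendsto hx.2)
  obtain ⟨y, hyC, hyx, -⟩ := exists_mem_ne_ne (h.two_lt_encard C hC𝓐) x x
  have hseq : CrossSeqAvoiding 𝓐 D C {y, x} :=
    h.crossSeqAvoiding_pair hD𝓐 hC𝓐
      ((inter_comm C D ▸ hsub).trans (singleton_subset_iff.2 (mem_insert_of_mem y rfl)))
      hyC ⟨hx.2, hx.1⟩ hyx
  refine haz (h.attractor_eq_of_crossSeqAvoiding ht hD𝓐 hC𝓐 (.inl hD) hC hseq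
    (mem_insert_of_mem y rfl) (fun w hw _ => hD.tendsto hw) ?_).symm
  intro F hF𝓐 hFS F' t f hF hzF'
  have htx : t ≠ x := fun htx =>
    disjoint_left.1 hFS hF.repeller_mem (htx ▸ mem_insert_of_mem y rfl)
  obtain rfl | hfz := eq_or_ne f z
  · exact haz (h.attractor_eq_of_repeller_ne ht hF𝓐 hC𝓐 hF hC htx
      (hF.inter_nonempty hC ⟨f, hzF', hzC'⟩)).symm
  · exact htx (tendsto_nhds_unique ((hF.inv (h.isCompact F hF𝓐)).tendsto hzF' hfz.symm)
      ((hC.inv hCc).tendsto hzC' (Ne.symm haz)))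

lemma exists_convergesOn_of_crosses_of_ne (h : IsCrossingFamily 𝓐)
    (ht : ∀ E ∈ 𝓐, ∃ e, HasAttractor g l E e) (hC𝓐 : C ∈ 𝓐) (hD𝓐 : D ∈ 𝓐)
    (hC : HasAttractor g l C a) (hD : HasAttractor g l D b) (hCD : Crosses C D) (hab : a ≠ b) :
    ∃ D' s, ConvergesOn g l D D' s b := by
  obtain ⟨x, hxC, hxD⟩ := h.inter_nonempty_of_crosses hC𝓐 hD𝓐 hC hD hab hCD
  refine hD.resolve_left fun hD => hab ?_
  obtain hC | ⟨C', r, hC⟩ := hC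
  · exact hC.eq_of_mem hD hxC hxD
  · exact h.attractor_eq_of_crosses_shrinksTo ht hC𝓐 hD𝓐 hC hD hCD

lemma inter_eq_singleton_of_crosses_of_ne (h : IsCrossingFamily 𝓐)
    (ht : ∀ E ∈ 𝓐, ∃ e, HasAttractor g l E e) (hC𝓐 : C ∈ 𝓐) (hD𝓐 : D ∈ 𝓐)
    (hC : HasAttractor g l C a) (hD : ConvergesOn g l D D' s b) (hCD : Crosses C D)
    (hab : a ≠ b) : C ∩ D = {s} := by
  have hD' : HasAttractor g l D b := .inr ⟨D', s, hD⟩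
  obtain ⟨C', r, hC'⟩ := h.exists_convergesOn_of_crosses_of_ne ht hD𝓐 hC𝓐 hD' hC hCD.symm hab.symm
  have hne := h.inter_nonempty_of_crosses hC𝓐 hD𝓐 hC hD' hab hCD
  obtain rfl : r = s := by
    by_contra hrs
    exact hab (h.attractor_eq_of_repeller_ne ht hC𝓐 hD𝓐 hC' hD hrs hne)
  refine hne.subset_singleton_iff.1 ?_
  simpa only [pair_eq_singleton] using hC'.inter_subset_pair hD hab

/-- The attractor can only change from `a` to `b` at a member that does not shrink. -/
lemma exists_convergesOn_of_crossSeqAvoiding (h : IsCrossingFamily 𝓐)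
    (ht : ∀ E ∈ 𝓐, ∃ e, HasAttractor g l E e) (hC𝓐 : C ∈ 𝓐) (hD𝓐 : D ∈ 𝓐)
    (hC : HasAttractor g l C a) (hD : ConvergesOn g l D D' s b) (hab : a ≠ b)
    (hseq : CrossSeqAvoiding 𝓐 C D S) (hs : s ∈ S) :
    ∃ L ∈ 𝓐, Disjoint L S ∧ ∃ L' t, ConvergesOn g l L L' t b := by
  by_contra! hnone
  obtain ⟨E, hE𝓐, hES, hE, hED⟩ := hseq.exists_last (P := fun F => ¬ HasAttractor g l F b)
    (fun F hF𝓐 hFS hCF hF => by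
      obtain ⟨F', t, hF'⟩ := h.exists_convergesOn_of_crosses_of_ne ht hC𝓐 hF𝓐 hC hF hCF hab
      exact hnone F hF𝓐 hFS F' t hF')
    (fun E hE𝓐 F hF𝓐 _ hFS hE hEF hF => by
      obtain ⟨e, hEe⟩ := ht E hE𝓐
      obtain ⟨F', t, hF'⟩ := h.exists_convergesOn_of_crosses_of_ne ht hE𝓐 hF𝓐 hEe hF hEF
        fun heb => hE (heb ▸ hEe)
      exact hnone F hF𝓐 hFS F' t hF')
  obtain ⟨e, hEe⟩ := ht E hE𝓐
  have hinter : E ∩ D = {s} :=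
    h.inter_eq_singleton_of_crosses_of_ne ht hE𝓐 hD𝓐 hEe hD hED fun heb => hE (heb ▸ hEe)
  exact disjoint_left.1 hES (hinter.ge rfl).1 hs

lemma attractor_eq_of_crosses (h : IsCrossingFamily 𝓐)
    (ht : ∀ E ∈ 𝓐, ∃ e, HasAttractor g l E e) (hC𝓐 : C ∈ 𝓐) (hD𝓐 : D ∈ 𝓐)
    (hC : HasAttractor g l C a) (hD : HasAttractor g l D b) (hCD : Crosses C D) : a = b := by
  by_contra hab
  obtain ⟨D', s, hD'⟩ := h.exists_convergesOn_of_crosses_of_ne ht hC𝓐 hD𝓐 hC hD hCD hab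
  have hinter : C ∩ D = {s} := h.inter_eq_singleton_of_crosses_of_ne ht hC𝓐 hD𝓐 hC hD' hCD hab
  -- Besides any given `q` there is another point of `D` sent to `b`, so `g i` is not injective.
  have hother : ∀ q ∈ D, q ≠ s → ∃ x ∈ D, x ≠ s ∧ x ≠ q ∧ ∀ᶠ i in l, g i • x = b := by
    intro q hq hqs
    have hseq : CrossSeqAvoiding 𝓐 C D {q, s} :=
      h.crossSeqAvoiding_pair hC𝓐 hD𝓐
        (hinter.trans_subset (singleton_subset_iff.2 (mem_insert_of_mem q rfl))) hq
        (hinter.ge rfl) hqs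
    obtain ⟨L, hL𝓐, hLS, L', t, hL⟩ := h.exists_convergesOn_of_crossSeqAvoiding ht hC𝓐 hD𝓐 hC hD'
      hab hseq (mem_insert_of_mem q rfl)
    have hLS' : ∀ x ∈ L, x ≠ s ∧ x ≠ q := fun x hx =>
      (not_or.1 (disjoint_left.1 hLS hx)).symm
    obtain ⟨x, hx, hxb⟩ := hL.exists_eventually_smul_eq hD' (h.isCompact L hL𝓐)
      (h.isCompact D hD𝓐) (hLS' t hL.repeller_mem).1
    exact ⟨x, hx.2, (hLS' x hx.1).1, (hLS' x hx.1).2, hxb⟩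
  obtain ⟨q, hq, hqs, -⟩ := exists_mem_ne_ne (h.two_lt_encard D hD𝓐) s s
  obtain ⟨x, hx, hxs, -, hxb⟩ := hother q hq hqs
  obtain ⟨y, -, -, hyx, hyb⟩ := hother x hx hxs
  obtain ⟨i, hxi, hyi⟩ := (hxb.and hyb).exists
  exact hyx (MulAction.injective (g i) (hyi.trans hxi.symm))

theorem attractor_eq (h : IsCrossingFamily 𝓐)
    (ht : ∀ E ∈ 𝓐, ∃ e, HasAttractor g l E e) (hC𝓐 : C ∈ 𝓐) (hD𝓐 : D ∈ 𝓐)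
    (hC : HasAttractor g l C a) (hD : HasAttractor g l D b) : a = b := by
  obtain hempty | hne := (C ∩ D).eq_empty_or_nonempty
  · have hpropagate : ∀ E ∈ 𝓐, ∀ F ∈ 𝓐, HasAttractor g l E a → Crosses E F →
        HasAttractor g l F a := fun E hE𝓐 F hF𝓐 hE hEF => by
      obtain ⟨f, hF⟩ := ht F hF𝓐
      exact h.attractor_eq_of_crosses ht hE𝓐 hF𝓐 hE hF hEF ▸ hF
    obtain ⟨E, hE𝓐, -, hE, hED⟩ := (h.crossSeqAvoiding_empty hC𝓐 hD𝓐 hempty).exists_last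
      (fun F hF𝓐 _ hCF => hpropagate C hC𝓐 F hF𝓐 hC hCF)
      (fun E hE𝓐 F hF𝓐 _ _ hE hEF => hpropagate E hE𝓐 F hF𝓐 hE hEF)
    exact h.attractor_eq_of_crosses ht hE𝓐 hD𝓐 hE hD hED
  · exact h.attractor_eq_of_crosses ht hC𝓐 hD𝓐 hC hD (.inl hne)

/-- Applied to `g⁻¹`, for which repellers are attractors, `IsCrossingFamily.attractor_eq` shows that
all members that do not shrink have the same repeller. -/
theorem shrinksTo_of_convergesOn (h : IsCrossingFamily 𝓐)
    (hinv : ∀ γ : G, ∀ E ∈ 𝓐, γ • E ∈ 𝓐) (ht : ∀ E ∈ 𝓐, ∃ e, HasAttractor g l E e)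
    (ht' : ∀ E ∈ 𝓐, ∃ e, HasAttractor g⁻¹ l E e) (hC𝓐 : C ∈ 𝓐) (hD𝓐 : D ∈ 𝓐)
    (hC : ConvergesOn g l C C' r a) {K : Set X} (hKD : K ⊆ D) (hK : IsCompact K) (hr : r ∉ K) :
    ShrinksTo g l K a := by
  obtain ⟨b, hDb⟩ := ht D hD𝓐
  obtain rfl : a = b := h.attractor_eq ht hC𝓐 hD𝓐 (.inr ⟨C', r, hC⟩) hDb
  have image_mem : ∀ {E E' : Set X} {t e : X}, E ∈ 𝓐 → ConvergesOn g l E E' t e → E' ∈ 𝓐 := by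
    intro E E' t e hE𝓐 hE
    obtain ⟨i, hi⟩ := hE.smul_eq.exists
    exact hi ▸ hinv (g i) E hE𝓐
  obtain hD | ⟨D', s, hD⟩ := hDb
  · exact hD.mono hKD
  · obtain rfl : r = s := h.attractor_eq ht' (image_mem hC𝓐 hC) (image_mem hD𝓐 hD)
      (.inr ⟨C, a, hC.inv (h.isCompact C hC𝓐)⟩) (.inr ⟨D, a, hD.inv (h.isCompact D hD𝓐)⟩)
    exact hD.shrinksTo K hKD hK hr

end IsCrossingFamily

end CommonAttractor

/-! ### Extraction of subsequences -/

section Subsequences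

lemma exists_strictMono_injective_comp {α : Type*} {u : ℕ → α} (hu : Tendsto u atTop cofinite) :
    ∃ φ : ℕ → ℕ, StrictMono φ ∧ Function.Injective (u ∘ φ) := by
  have hinf : (range u).Infinite := fun hfin => by
    obtain ⟨i, hi⟩ := (hu.eventually hfin.eventually_cofinite_notMem).exists
    exact hi (mem_range_self i)
  choose m hm using fun k => (hinf.natEmbedding _ k).2
  have hum : Function.Injective (u ∘ m) := fun i j hij =>
    (hinf.natEmbedding _).injective (Subtype.ext ((hm i).symm.trans (hij.trans (hm j))))
  obtain ⟨ψ, hψ, hmψ⟩ :=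
    strictMono_subseq_of_tendsto_atTop hum.of_comp.nat_tendsto_atTop
  exact ⟨m ∘ ψ, hmψ, hum.comp hψ.injective⟩

/-- The successive subsequences generate a decreasing sequence of filters, and any subsequence
tending to their infimum works. -/
lemma exists_strictMono_forall_map {κ : Type*} [Countable κ] {P : κ → Filter ℕ → Prop}
    (hP : ∀ j, Antitone (P j))
    (hex : ∀ j (φ : ℕ → ℕ), StrictMono φ →
      ∃ ψ : ℕ → ℕ, StrictMono ψ ∧ P j (map (φ ∘ ψ) atTop)) :
    ∃ φ : ℕ → ℕ, StrictMono φ ∧ ∀ j, P j (map φ atTop) := by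
  cases isEmpty_or_nonempty κ
  · exact ⟨id, strictMono_id, isEmptyElim⟩
  obtain ⟨e, he⟩ := exists_surjective_nat κ
  choose ψ hψ hPψ using hex
  let Φ : ℕ → {φ : ℕ → ℕ // StrictMono φ} := fun k =>
    Nat.rec ⟨id, strictMono_id⟩
      (fun k φ => ⟨φ.1 ∘ ψ (e k) φ.1 φ.2, φ.2.comp (hψ (e k) φ.1 φ.2)⟩) k
  let L : ℕ → Filter ℕ := fun k => map (Φ k).1 atTop
  have hL : Antitone L := antitone_nat_of_succ_le fun k => by
    change map ((Φ k).1 ∘ ψ (e k) (Φ k).1 (Φ k).2) atTop ≤ map (Φ k).1 atTop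
    rw [← Filter.map_map]
    exact map_mono (hψ (e k) (Φ k).1 (Φ k).2).tendsto_atTop
  have hPL : ∀ k, P (e k) (L (k + 1)) := fun k => hPψ (e k) (Φ k).1 (Φ k).2
  have : (⨅ k, L k).NeBot := iInf_neBot_of_directed' hL.directed_ge fun k => map_neBot
  obtain ⟨m, hm⟩ := exists_seq_tendsto (⨅ k, L k)
  obtain ⟨χ, hχ, hmχ⟩ := strictMono_subseq_of_tendsto_atTop
    (hm.mono_right ((iInf_le L 0).trans (Φ 0).2.tendsto_atTop))
  refine ⟨m ∘ χ, hmχ, fun j => ?_⟩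
  obtain ⟨k, rfl⟩ := he j
  exact hP (e k) ((hm.comp hχ.tendsto_atTop).trans (iInf_le L (k + 1))) (hPL k)

end Subsequences

section NullFamily

variable {ι X : Type*} [PseudoMetricSpace X] {𝓐 : Set (Set X)} {l : Filter ι} {s : ι → Set X}

lemma tendsto_smallSets_of_tendsto_diam_s10 {x : ι → X} {z : X}
    (hs : Tendsto (fun i => Metric.diam (s i)) l (𝓝 0)) (hbdd : ∀ i, Bornology.IsBounded (s i))
    (hxs : ∀ i, x i ∈ s i) (hx : Tendsto x l (𝓝 z)) : Tendsto s l (𝓝 z).smallSets := by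
  have hradius : Tendsto (fun i => Metric.diam (s i) + dist (x i) z) l (𝓝 0) := by
    simpa only [add_zero] using hs.add (tendsto_iff_dist_tendsto_zero.1 hx)
  refine ((tendsto_closedBall_smallSets z).comp hradius).smallSets_mono
    (Eventually.of_forall fun i y hy => Metric.mem_closedBall.2 ?_)
  exact (dist_triangle y (x i) z).trans
    (add_le_add_left (Metric.dist_le_diam_of_mem (hbdd i) hy (hxs i)) _)

namespace NullFam

lemma countable (h : NullFam 𝓐) (hpos : ∀ E ∈ 𝓐, 0 < Metric.diam E) : 𝓐.Countable := by
  have hcover : 𝓐 ⊆ ⋃ k : ℕ, {E ∈ 𝓐 | 1 / ((k : ℝ) + 1) < Metric.diam E} := fun E hE => by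
    obtain ⟨k, hk⟩ := exists_nat_one_div_lt (hpos E hE)
    exact mem_iUnion.2 ⟨k, hE, hk⟩
  exact (countable_iUnion fun k => (h _ Nat.one_div_pos_of_nat).countable).mono hcover

lemma tendsto_diam_s10 (h : NullFam 𝓐) (hs : ∀ i, s i ∈ 𝓐) (hne : ∀ E, ∀ᶠ i in l, s i ≠ E) :
    Tendsto (fun i => Metric.diam (s i)) l (𝓝 0) := by
  refine tendsto_order.2
    ⟨fun c hc => Eventually.of_forall fun i => hc.trans_le Metric.diam_nonneg, fun ε hε => ?_⟩
  filter_upwards [(eventually_all_finite (h (ε / 2) (half_pos hε))).2 fun E _ => hne E] with i hi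
  exact (not_lt.1 fun hlt => hi _ ⟨hs i, hlt⟩ rfl).trans_lt (half_lt_self hε)

end NullFam

end NullFamily

section Extraction

variable {G X : Type*} [Group G] [MulAction G X] {g : ℕ → G} {A C C' : Set X} {n p : X}

lemma ConvSeqOn.convergesOn [TopologicalSpace X]
    (h : ConvSeqOn A (fun i (x : X) => g i • x) n p) (hg : ∀ i, g i • A = A) :
    ConvergesOn g atTop A A n p where
  smul_eq := Eventually.of_forall hg
  repeller_mem := h.1
  attractor_mem := h.2.1
  shrinksTo K hK hKc hn := tendsto_smallSets_iff.2 fun U hU => by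
    obtain ⟨V, hVU, hV, hpV⟩ := mem_nhds_iff.1 hU
    exact (h.2.2 K hK hKc hn V hV hpV).mono fun i hi => Subset.trans hi hVU

lemma ConvGroupOn.exists_convergesOn [TopologicalSpace X] [ContinuousConstSMul G X]
    (hC : ConvGroupOn (stab G C) C) (hg : Tendsto g atTop cofinite)
    (hrec : ∃ᶠ i in atTop, g i • C = C') :
    ∃ φ : ℕ → ℕ, StrictMono φ ∧ ∃ r a, ConvergesOn (g ∘ φ) atTop C C' r a := by
  obtain ⟨φ₀, hφ₀, hφ₀C⟩ := extraction_of_frequently_atTop hrec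
  obtain ⟨φ₁, hφ₁, hinj⟩ := exists_strictMono_injective_comp (hg.comp hφ₀.tendsto_atTop)
  set u : ℕ → G := (g ∘ φ₀) ∘ φ₁
  have huC : ∀ i, u i • C = C' := fun i => hφ₀C (φ₁ i)
  have hstab : ∀ i, (u 0)⁻¹ * u i ∈ stab G C := fun i => by
    change ((u 0)⁻¹ * u i) • C = C
    rw [mul_smul, huC i, ← huC 0, inv_smul_smul]
  obtain ⟨ψ, hψ, r, a, hconv⟩ := hC _ hstab ((mul_right_injective (u 0)⁻¹).comp hinj)
  have hu := (hconv.convergesOn fun i => hstab (ψ i)).const_mul (u 0)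
  simp only [mul_inv_cancel_left, huC] at hu
  exact ⟨φ₀ ∘ φ₁ ∘ ψ, hφ₀.comp (hφ₁.comp hψ), r, u 0 • a, hu⟩

variable [PseudoMetricSpace X] [CompactSpace X] {𝓐 : Set (Set X)}

lemma NullFam.exists_shrinksTo (h : NullFam 𝓐) (hC : C.Nonempty) (hC𝓐 : ∀ i, g i • C ∈ 𝓐)
    (hne : ∀ E, ∀ᶠ i in atTop, g i • C ≠ E) :
    ∃ φ : ℕ → ℕ, StrictMono φ ∧ ∃ z, ShrinksTo (g ∘ φ) atTop C z := by
  obtain ⟨x, hx⟩ := hC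
  obtain ⟨z, φ, hφ, hz⟩ := CompactSpace.tendsto_subseq fun i => g i • x
  exact ⟨φ, hφ, z, tendsto_smallSets_of_tendsto_diam_s10
    ((h.tendsto_diam_s10 hC𝓐 hne).comp hφ.tendsto_atTop) (fun _ => Metric.isBounded_of_compactSpace)
    (fun i => smul_mem_smul_set hx) hz⟩

variable [ContinuousConstSMul G X]

lemma NullFam.exists_hasAttractor (h : NullFam 𝓐) (hC : C.Nonempty) (hC𝓐 : ∀ i, g i • C ∈ 𝓐)
    (hstab : ConvGroupOn (stab G C) C) (hg : Tendsto g atTop cofinite) :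
    ∃ φ : ℕ → ℕ, StrictMono φ ∧ ∃ a, HasAttractor (g ∘ φ) atTop C a := by
  by_cases hrec : ∃ C', ∃ᶠ i in atTop, g i • C = C'
  · obtain ⟨C', hC'⟩ := hrec
    obtain ⟨φ, hφ, r, a, hconv⟩ := hstab.exists_convergesOn hg hC'
    exact ⟨φ, hφ, a, .inr ⟨C', r, hconv⟩⟩
  · simp only [not_exists, not_frequently] at hrec
    obtain ⟨φ, hφ, z, hshrink⟩ := h.exists_shrinksTo hC hC𝓐 hrec
    exact ⟨φ, hφ, z, .inl hshrink⟩

theorem NullFam.exists_forall_hasAttractor (h : NullFam 𝓐) (hpos : ∀ E ∈ 𝓐, 0 < Metric.diam E)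
    (hinv : ∀ γ : G, ∀ E ∈ 𝓐, γ • E ∈ 𝓐) (hstab : ∀ E ∈ 𝓐, ConvGroupOn (stab G E) E)
    (hg : Tendsto g atTop cofinite) :
    ∃ φ : ℕ → ℕ, StrictMono φ ∧ ∀ E ∈ 𝓐, (∃ a, HasAttractor g (map φ atTop) E a) ∧
      ∃ a, HasAttractor g⁻¹ (map φ atTop) E a := by
  have : Countable 𝓐 := (h.countable hpos).to_subtype
  have hne : ∀ E ∈ 𝓐, E.Nonempty := fun E hE => by
    rw [nonempty_iff_ne_empty]
    rintro rfl
    exact (hpos ∅ hE).ne' Metric.diam_empty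
  let P : 𝓐 → Filter ℕ → Prop := fun E l =>
    (∃ a, HasAttractor g l E.1 a) ∧ ∃ a, HasAttractor g⁻¹ l E.1 a
  have hP : ∀ E, Antitone (P E) := fun E l l' hl =>
    And.imp (Exists.imp fun _ ha => ha.mono_filter hl) (Exists.imp fun _ ha => ha.mono_filter hl)
  have hex : ∀ E (φ : ℕ → ℕ), StrictMono φ →
      ∃ ψ : ℕ → ℕ, StrictMono ψ ∧ P E (map (φ ∘ ψ) atTop) := fun ⟨E, hE⟩ φ hφ => by
    have hone : ∀ u : ℕ → G, Tendsto u atTop cofinite →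
        ∃ ψ : ℕ → ℕ, StrictMono ψ ∧ ∃ a, HasAttractor (u ∘ ψ) atTop E a := fun u hu =>
      h.exists_hasAttractor (hne E hE) (fun i => hinv (u i) E hE) (hstab E hE) hu
    have hgφ := hg.comp hφ.tendsto_atTop
    obtain ⟨ψ₁, hψ₁, a, ha⟩ := hone (g ∘ φ) hgφ
    obtain ⟨ψ₂, hψ₂, b, hb⟩ := hone (g⁻¹ ∘ φ ∘ ψ₁)
      (inv_injective.tendsto_cofinite.comp (hgφ.comp hψ₁.tendsto_atTop))
    have ha' : HasAttractor g (map (φ ∘ ψ₁) atTop) E a := HasAttractor.map ha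
    have hb' : HasAttractor g⁻¹ (map (φ ∘ ψ₁ ∘ ψ₂) atTop) E b := HasAttractor.map hb
    have hsub : map (φ ∘ ψ₁ ∘ ψ₂) atTop ≤ map (φ ∘ ψ₁) atTop := by
      rw [← Function.comp_assoc, ← Filter.map_map]
      exact map_mono hψ₂.tendsto_atTop
    exact ⟨ψ₁ ∘ ψ₂, hψ₁.comp hψ₂, ⟨a, ha'.mono_filter hsub⟩, b, hb'⟩
  obtain ⟨φ, hφ, hPφ⟩ := exists_strictMono_forall_map hP hex
  exact ⟨φ, hφ, fun E hE => hPφ ⟨E, hE⟩⟩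

end Extraction

section Attraction

lemma IsLocalConvPairing.isCrossingFamily {G X : Type*} [Group G] [MulAction G X] [MetricSpace X]
    [CompactSpace X] {𝓐 : Set (Set X)} (h : IsLocalConvPairing G 𝓐) : IsCrossingFamily 𝓐 where
  isCompact A hA := (h.closed A hA).isCompact
  two_lt_encard := h.big
  connect := h.connect

theorem attract_far_general {G X : Type*} [Group G] [MulAction G X]
    [MetricSpace X] [CompactSpace X] [LocallyConnectedSpace X] [ContinuousConstSMul G X]
    {𝓐 : Set (Set X)} (hcross : IsCrossingFamily 𝓐) (hinv : ∀ γ : G, ∀ E ∈ 𝓐, γ • E ∈ 𝓐)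
    (hnull : NullFam 𝓐) (hstab : ∀ E ∈ 𝓐, ConvGroupOn (stab G E) E)
    {A : Set X} (hA : A ∈ 𝓐) {g : ℕ → G} (hg : ∀ i, g i ∈ stab G A) {n p : X}
    (hconv : ConvSeqOn A (fun i (x : X) => g i • x) n p) :
    ∃ k : ℕ → ℕ, StrictMono k ∧ ∀ B ∈ 𝓐, ∀ C : Set X, C ⊆ B → IsCompact C → n ∉ C →
      ∀ U : Set X, IsOpen U → p ∈ U → ∀ᶠ i in atTop, g (k i) • C ⊆ U := by
  have hgA : ConvergesOn g atTop A A n p := hconv.convergesOn hg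
  have hpos : ∀ E ∈ 𝓐, 0 < Metric.diam E := fun E hE => Metric.diam_pos
    (one_lt_encard_iff_nontrivial.1 (lt_trans (by norm_num) (hcross.two_lt_encard E hE)))
    Metric.isBounded_of_compactSpace
  obtain ⟨k, hk, hattr⟩ := hnull.exists_forall_hasAttractor hpos hinv hstab
    (hgA.tendsto_cofinite (hcross.two_lt_encard A hA))
  refine ⟨k, hk, fun B hB C hCB hC hn U hU hpU => ?_⟩
  have hshrink : ShrinksTo g (map k atTop) C p :=
    hcross.shrinksTo_of_convergesOn hinv (fun E hE => (hattr E hE).1) (fun E hE => (hattr E hE).2)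
      hA hB (hgA.mono_filter hk.tendsto_atTop) hCB hC hn
  exact eventually_map.1 (hshrink.eventually_subset (hU.mem_nhds hpU))

end Attraction

/-- Corollary: if `(g_i) ⊆ st(A)` acts as a convergence sequence on `A` with attractor
`p` and repeller `n`, then for any `B ∈ 𝓐` a subsequence attracts every compact subset
of `B \ {n}` to `p`. -/
theorem attract_far {G X : Type*} [Group G] [MulAction G X]
    [MetricSpace X] [CompactSpace X] [ConnectedSpace X] [LocallyConnectedSpace X]
    [ContinuousConstSMul G X]
    (hcut : ∀ x : X, IsPreconnected ({x}ᶜ : Set X))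
    (𝓐 : Set (Set X)) (h : IsLocalConvPairing G 𝓐)
    (A B : Set X) (hA : A ∈ 𝓐) (hB : B ∈ 𝓐)
    (g : ℕ → G) (hg : ∀ i, g i ∈ stab G A) (n p : X)
    (hconv : ConvSeqOn A (fun i (x : X) => g i • x) n p) :
    ∃ k : ℕ → ℕ, StrictMono k ∧ ∀ C : Set X, C ⊆ B → IsCompact C → n ∉ C →
      ∀ U : Set X, IsOpen U → p ∈ U → ∀ᶠ i in atTop, g (k i) • C ⊆ U := by
  obtain ⟨k, hk, hattract⟩ :=
    attract_far_general h.isCrossingFamily h.invariant h.null h.stabConv hA hg hconv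
  exact ⟨k, hk, hattract B hB⟩
end
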